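/- arXiv:1308.1069 — 6 statements merged into one kernel-verified Lean document; each statement's English description precedes it below -/
import Mathlib

section
/- There exists a universal constant C > 0 (independent of the graph and the group) such that the following holds. Suppose V is infinite. If E ⊆ V satisfies |E| ≤ Γ(r) for some real r ≥ 1, then for every finite subset A ⊆ V one has |A ∩ E| ≤ C · r · ‖∂A‖, where ‖∂A‖ is the edge-perimeter of A. -/
/-!
Fix a radius `k = ⌈r⌉`, write `Γ(n)` for the size of a ball `{y | dist o y < n}`, and let
`P = ‖∂A‖`. The proof has two ingredients.

* **Isoperimetry** (`isoperimetric`): if `2 |A| ≤ Γ(n)` then `|A| ≤ 2 n P`. Let `H` be the full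
  automorphism group. For vertices `x, y` let `a(x, y)` be the size of the orbit of `y` under the
  stabilizer of `x`. If `a(x, y) ≠ a(y, x)` for some edge `xy` (the nonunimodular case), then in
  the orbit of `(x, y)`, viewed as a directed graph contained in the given graph, all out-degrees
  equal one constant and all in-degrees another; comparing the arrows leaving and entering `A`
  gives `|A| ≤ P` at once (`ncard_le_of_ne`). Otherwise let `L(x, y)` be the number of pairs in
  the orbit of `(x, y)` which lead from `A` to its complement, divided by `a(x, y)` (`orbCut`).
  Counting the orbit of a triple in different ways gives `L(x, z) ≤ L(x, y) + L(y, z)` for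
  `x` adjacent to `y` (`orbCut_triangle`), whence `L(x, y) ≤ dist x y * P` (`orbCut_le`).
  Summing `L(o, y)` over the ball of radius `n` counts all pairs at distance `< n` leading out of
  `A` (`tsum_ball_crossing_le`), of which there are at least `|A| (Γ(n) - |A|) ≥ |A| Γ(n) / 2`.

* **Growth** (`mul_ball_le`): an infinite graph has a vertex at each distance from `o`; the balls
  of radius `k` around vertices at distances `k, 3k, 5k, …` from `o` are disjoint, so
  `j Γ(k) ≤ Γ(2kj)`.

With `j = ⌊2|A| / Γ(k)⌋ + 1` both apply to the radius `2kj`, giving `|A| ≤ 4 k j P`. As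
`|A ∩ E| ≤ min(|A|, Γ(k))`, also `j |A ∩ E| ≤ 3 |A|`, and the two combine to
`|A ∩ E| ≤ 12 k P ≤ 24 r P`.
-/

open scoped BigOperators

/-- The (modulus of the) graph gradient: `|∇f|(m) = ∑_{n ∼ m} |f(m) - f(n)|`. -/
noncomputable def gradAbs {V : Type} (G : SimpleGraph V) (f : V → ℝ) (m : V) : ℝ :=
  ∑ᶠ n ∈ G.neighborSet m, |f m - f n|

/-- The edge-perimeter `‖∂A‖ = ∑_{m ∈ V} |∇1_A|(m)` of a set of vertices. -/
noncomputable def edgePerim {V : Type} (G : SimpleGraph V) (A : Set V) : ℝ :=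
  ∑ᶠ m, gradAbs G (A.indicator (fun _ => (1 : ℝ))) m

open scoped ENNReal

/-! ### Sums over orbits -/

open Classical in
/-- The sum of `φ` over the `H`-orbit of `t₀`, valued in `ℝ≥0∞` so that no summability is needed. -/
noncomputable def orbSum (H : Type*) {T : Type*} [Group H] [MulAction H T] (t₀ : T)
    (φ : T → ℝ≥0∞) : ℝ≥0∞ :=
  ∑' t, if t ∈ MulAction.orbit H t₀ then φ t else 0

open Classical in
/-- The multiplicity of `π` at `t₀`: the number of points of the `H`-orbit of `t₀` with the same
image as `t₀`. For equivariant `π` it is the common fibre size of `π` over the orbit of `π t₀`. -/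
noncomputable def orbMult (H : Type*) {T U : Type*} [Group H] [MulAction H T] (π : T → U) (t₀ : T) :
    ℝ≥0∞ :=
  orbSum H t₀ (fun t => if π t = π t₀ then 1 else 0)

theorem smul_mem_orbit_iff' {H T : Type*} [Group H] [MulAction H T] (g : H) (t t₀ : T) :
    g • t ∈ MulAction.orbit H t₀ ↔ t ∈ MulAction.orbit H t₀ := by
  rw [← MulAction.orbit_eq_iff, MulAction.orbit_smul, MulAction.orbit_eq_iff]

/-- All fibres of an equivariant map between orbits have the same size, so a function pulled back
along the map sums to its sum over the image orbit times the fibre size. -/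
theorem orbSum_comp {H T U : Type*} [Group H] [MulAction H T] [MulAction H U]
    (π : T → U) (hπ : ∀ (g : H) t, π (g • t) = g • π t) (t₀ : T) (φ : U → ℝ≥0∞) :
    orbSum H t₀ (fun t => φ (π t)) = orbMult H π t₀ * orbSum H (π t₀) φ := by
  classical
  have h1 : orbSum H t₀ (fun t => φ (π t)) =
      ∑' u, φ u * orbSum H t₀ (fun t => if π t = u then 1 else 0) := by
    unfold orbSum
    simp_rw [← ENNReal.tsum_mul_left]
    rw [ENNReal.tsum_comm]
    refine tsum_congr fun t => ?_
    rw [tsum_eq_single (π t)]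
    · simp
    · intro u hu
      simp [hu.symm]
  rw [h1]
  conv_rhs => unfold orbSum
  rw [← ENNReal.tsum_mul_left]
  refine tsum_congr fun u => ?_
  split_ifs with hu
  · obtain ⟨g, rfl⟩ := hu
    rw [mul_comm]
    congr 1
    unfold orbMult orbSum
    rw [← (MulAction.toPerm g : Equiv.Perm T).tsum_eq]
    refine tsum_congr fun t => ?_
    have h2 : g • t ∈ MulAction.orbit H t₀ ↔ t ∈ MulAction.orbit H t₀ :=
      smul_mem_orbit_iff' g t t₀
    simp [h2, hπ]
  · rw [mul_zero]
    have : orbSum H t₀ (fun t => if π t = u then 1 else 0) = 0 := by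
      unfold orbSum
      rw [ENNReal.tsum_eq_zero]
      intro t
      rw [ite_eq_right_iff]
      rintro ⟨g, rfl⟩
      refine if_neg ?_
      rintro rfl
      exact hu ⟨g, (hπ g t₀).symm⟩
    rw [this, mul_zero]

theorem orbMult_comp {H T U W : Type*} [Group H] [MulAction H T] [MulAction H U]
    (π : T → U) (hπ : ∀ (g : H) t, π (g • t) = g • π t) (ρ : U → W) (t₀ : T) :
    orbMult H (fun t => ρ (π t)) t₀ = orbMult H π t₀ * orbMult H ρ (π t₀) := by
  classical
  exact orbSum_comp π hπ t₀ (fun u => if ρ u = ρ (π t₀) then 1 else 0)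

theorem orbMult_ne_zero {H T U : Type*} [Group H] [MulAction H T]
    (π : T → U) (t₀ : T) : orbMult H π t₀ ≠ 0 := by
  classical
  unfold orbMult orbSum
  intro h
  have := (ENNReal.tsum_eq_zero.1 h) t₀
  simp [MulAction.mem_orbit_self] at this

theorem orbMult_eq_encard {H T U : Type*} [Group H] [MulAction H T]
    (π : T → U) (t₀ : T) : orbMult H π t₀ =
    ((({t | t ∈ MulAction.orbit H t₀ ∧ π t = π t₀}.encard : ℕ∞)) : ℝ≥0∞) := by
  classical
  unfold orbMult orbSum
  rw [← ENNReal.tsum_set_one, tsum_subtype _ (fun _ => (1 : ℝ≥0∞))]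
  refine tsum_congr fun t => ?_
  simp [Set.indicator_apply, ite_and]

theorem orbMult_eq_nat {H T U : Type*} [Group H] [MulAction H T]
    (π : T → U) (t₀ : T)
    (h : {t | t ∈ MulAction.orbit H t₀ ∧ π t = π t₀}.Finite) : ∃ n : ℕ, orbMult H π t₀ = n := by
  refine ⟨{t | t ∈ MulAction.orbit H t₀ ∧ π t = π t₀}.ncard, ?_⟩
  rw [orbMult_eq_encard, ← h.cast_ncard_eq]
  simp

/-! ### Balls in a locally finite transitive graph -/

section Graph
variable {V : Type} {G : SimpleGraph V}

theorem dist_smul_smul (g : G ≃g G) (hc : G.Connected) (u v : V) :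
    G.dist (g • u) (g • v) = G.dist u v := by
  have key : ∀ (g : G ≃g G) (u v : V), G.dist (g u) (g v) ≤ G.dist u v := by
    intro g u v
    obtain ⟨p, hp⟩ := hc.exists_walk_length_eq_dist u v
    rw [← hp, ← SimpleGraph.Walk.length_map g.toHom p]
    exact SimpleGraph.dist_le _
  apply le_antisymm (key g u v)
  have := key g⁻¹ (g • u) (g • v)
  change G.dist (g⁻¹ • g • u) (g⁻¹ • g • v) ≤ _ at this
  simpa using this

theorem exists_adj_dist (hc : G.Connected) {o y : V} {m : ℕ} (h : G.dist o y = m + 1) :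
    ∃ z, G.Adj y z ∧ G.dist o z = m := by
  obtain ⟨p, hp⟩ := hc.exists_walk_length_eq_dist y o
  rw [SimpleGraph.dist_comm, h] at hp
  cases p with
  | nil => simp at hp
  | @cons _ z _ hz q =>
    refine ⟨z, hz, ?_⟩
    have h1 := SimpleGraph.dist_le q
    rw [SimpleGraph.dist_comm] at h1
    have h2 := hc.dist_triangle (u := o) (v := z) (w := y)
    rw [SimpleGraph.dist_eq_one_iff_adj.2 hz.symm] at h2
    simp at hp
    omega

theorem finite_ball (hc : G.Connected) (hf : ∀ v : V, (G.neighborSet v).Finite) (o : V) (n : ℕ) :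
    {y | G.dist o y < n}.Finite := by
  induction n with
  | zero => simp
  | succ n ih =>
    refine ((Set.finite_singleton o).union (ih.biUnion fun z _ => hf z)).subset ?_
    intro y hy
    rcases Nat.eq_zero_or_pos (G.dist o y) with h0 | h0
    · left
      exact (hc.dist_eq_zero_iff.1 h0).symm
    · right
      obtain ⟨z, hz, hd⟩ := exists_adj_dist hc (m := G.dist o y - 1) (o := o) (y := y) (by omega)
      simp only [Set.mem_iUnion, Set.mem_ofPred_eq] at hy ⊢
      exact ⟨z, by omega, hz.symm⟩

theorem exists_vertex_dist_eq [Infinite V] (hc : G.Connected)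
    (hf : ∀ v : V, (G.neighborSet v).Finite) (o : V) (n : ℕ) : ∃ y, G.dist o y = n := by
  have h1 : ∃ y, n ≤ G.dist o y := by
    by_contra! h
    exact Set.infinite_univ ((finite_ball hc hf o n).subset fun y _ => h y)
  obtain ⟨y, hy⟩ := h1
  induction hy' : G.dist o y - n generalizing y with
  | zero => exact ⟨y, by omega⟩
  | succ k ih =>
    obtain ⟨z, -, hz⟩ := exists_adj_dist hc (m := G.dist o y - 1) (o := o) (y := y) (by omega)
    exact ih z (by omega) (by omega)

/-- Packing: the ball of radius `2kj` contains `j` disjoint balls of radius `k`. The inductive step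
adds the ball around a vertex at distance `2kj + k` from `o`, which lies in the new shell. -/
theorem mul_ball_le [Infinite V] (hc : G.Connected) (hf : ∀ v : V, (G.neighborSet v).Finite)
    (k N : ℕ) (hN : ∀ m, {y | G.dist m y < k}.ncard = N) (o : V) (j : ℕ) :
    j * N ≤ {y | G.dist o y < 2 * k * j}.ncard := by
  induction j with
  | zero => simp
  | succ j ih =>
    obtain ⟨v, hv⟩ := exists_vertex_dist_eq hc hf o (2 * k * j + k)
    have hdisj : Disjoint {y | G.dist o y < 2 * k * j} {y | G.dist v y < k} := by
      rw [Set.disjoint_left]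
      intro y h1 h2
      have := hc.dist_triangle (u := o) (v := y) (w := v)
      rw [SimpleGraph.dist_comm (u := y)] at this
      simp only [Set.mem_ofPred_eq] at h1 h2
      omega
    have hsub : {y | G.dist o y < 2 * k * j} ∪ {y | G.dist v y < k} ⊆
        {y | G.dist o y < 2 * k * (j + 1)} := by
      rintro y (h | h)
      · simp only [Set.mem_ofPred_eq] at h ⊢
        nlinarith
      · have := hc.dist_triangle (u := o) (v := v) (w := y)
        simp only [Set.mem_ofPred_eq] at h ⊢
        rw [mul_add]
        omega
    have := Set.ncard_le_ncard hsub (finite_ball hc hf _ _)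
    rw [Set.ncard_union_eq hdisj (finite_ball hc hf _ _) (finite_ball hc hf _ _), hN] at this
    nlinarith


/-! ### Orbits of pairs crossing the boundary -/

theorem tsum_pair (f : V × V → ℝ≥0∞) : ∑' p, f p = ∑' x, ∑' y, f (x, y) :=
  ENNReal.tsum_prod (f := fun x y => f (x, y))

open Classical in
/-- The indicator of the pairs leading from `A` to its complement. -/
noncomputable def crossing {V : Type} (A : Set V) (p : V × V) : ℝ≥0∞ :=
  if p.1 ∈ A ∧ p.2 ∉ A then 1 else 0

open Classical in
/-- The number of edges between `A` and its complement, each counted once, oriented outwards. -/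
noncomputable def cutCount {V : Type} (G : SimpleGraph V) (A : Set V) : ℝ≥0∞ :=
  ∑' p : V × V, if G.Adj p.1 p.2 then crossing A p else 0

/-- The number of pairs in the automorphism orbit of `(x, y)` which lead out of `A`, normalized by
the number of pairs in that orbit with first vertex `x`. -/
noncomputable def orbCut {V : Type} (G : SimpleGraph V) (A : Set V) (x y : V) : ℝ≥0∞ :=
  orbSum (G ≃g G) (x, y) (crossing A) / orbMult (G ≃g G) Prod.fst (x, y)

theorem finite_orbit_fst (hc : G.Connected) (hf : ∀ v : V, (G.neighborSet v).Finite) (x y : V) :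
    {t | t ∈ MulAction.orbit (G ≃g G) (x, y) ∧ t.1 = x}.Finite := by
  refine ((Set.finite_singleton x).prod (finite_ball hc hf x (G.dist x y + 1))).subset ?_
  rintro _ ⟨⟨g, rfl⟩, h⟩
  have := dist_smul_smul g hc x y
  change g • x = x at h
  rw [h] at this
  refine ⟨h, ?_⟩
  change G.dist x (g • y) < _
  omega

theorem finite_orbit_snd (hc : G.Connected) (hf : ∀ v : V, (G.neighborSet v).Finite) (x y : V) :
    {t | t ∈ MulAction.orbit (G ≃g G) (x, y) ∧ t.2 = y}.Finite := by
  refine ((finite_ball hc hf y (G.dist x y + 1)).prod (Set.finite_singleton y)).subset ?_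
  rintro _ ⟨⟨g, rfl⟩, h⟩
  have := dist_smul_smul g hc x y
  change g • y = y at h
  rw [h, SimpleGraph.dist_comm] at this
  refine ⟨?_, h⟩
  change G.dist y (g • x) < _
  omega

theorem finite_orbit_triple (hc : G.Connected) (hf : ∀ v : V, (G.neighborSet v).Finite)
    (x y z : V) :
    {t | t ∈ MulAction.orbit (G ≃g G) (x, y, z) ∧ t.1 = x}.Finite := by
  refine ((Set.finite_singleton x).prod ((finite_ball hc hf x (G.dist x y + 1)).prod
    (finite_ball hc hf x (G.dist x z + 1)))).subset ?_
  rintro _ ⟨⟨g, rfl⟩, h⟩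
  have h1 := dist_smul_smul g hc x y
  have h2 := dist_smul_smul g hc x z
  change g • x = x at h
  rw [h] at h1 h2
  refine ⟨h, ?_, ?_⟩
  · change G.dist x (g • y) < _
    omega
  · change G.dist x (g • z) < _
    omega

theorem crossing_le (A : Set V) (x y z : V) :
    crossing A (x, z) ≤ crossing A (x, y) + crossing A (y, z) := by
  unfold crossing
  by_cases hx : x ∈ A <;> by_cases hy : y ∈ A <;> by_cases hz : z ∈ A <;> simp [hx, hy, hz]

theorem orbSum_add_le {H T : Type*} [Group H] [MulAction H T] (t₀ : T) (φ ψ χ : T → ℝ≥0∞)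
    (h : ∀ t, φ t ≤ ψ t + χ t) : orbSum H t₀ φ ≤ orbSum H t₀ ψ + orbSum H t₀ χ := by
  unfold orbSum
  rw [← ENNReal.tsum_add]
  refine ENNReal.tsum_le_tsum fun t => ?_
  split_ifs
  · exact h t
  · simp

theorem orbMult_mul_orbCut (hc : G.Connected) (hf : ∀ v : V, (G.neighborSet v).Finite)
    (A : Set V) (x y : V) :
    orbMult (G ≃g G) Prod.fst (x, y) * orbCut G A x y = orbSum (G ≃g G) (x, y) (crossing A) := by
  obtain ⟨n, hn⟩ := orbMult_eq_nat (H := G ≃g G) Prod.fst (x, y) (finite_orbit_fst hc hf x y)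
  unfold orbCut
  refine ENNReal.mul_div_cancel (orbMult_ne_zero _ _) ?_
  rw [hn]
  simp

/-- A triangle inequality for `orbCut`. The number of triples in the orbit of `(x, y, z)` with first
vertex `x` equals the number with middle vertex `y`, by the unimodularity hypothesis on `(x, y)`;
hence summing over this orbit the pointwise inequality `crossing_le` gives the three values of
`orbCut` with the same weight. -/
theorem orbCut_triangle (hc : G.Connected) (hf : ∀ v : V, (G.neighborSet v).Finite)
    (A : Set V) {x y : V} (z : V)
    (hxy : orbMult (G ≃g G) Prod.fst (x, y) = orbMult (G ≃g G) Prod.snd (x, y)) :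
    orbCut G A x z ≤ orbCut G A x y + orbCut G A y z := by
  set t₀ : V × V × V := (x, y, z)
  set c := orbMult (G ≃g G) (fun t : V × V × V => t.1) t₀ with hcdef
  have e1 : c = orbMult (G ≃g G) (fun t : V × V × V => (t.1, t.2.2)) t₀ *
      orbMult (G ≃g G) Prod.fst (x, z) :=
    orbMult_comp (H := G ≃g G) (fun t : V × V × V => (t.1, t.2.2)) (fun _ _ => rfl) Prod.fst t₀
  have e2 : c = orbMult (G ≃g G) (fun t : V × V × V => (t.1, t.2.1)) t₀ *
      orbMult (G ≃g G) Prod.fst (x, y) :=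
    orbMult_comp (H := G ≃g G) (fun t : V × V × V => (t.1, t.2.1)) (fun _ _ => rfl) Prod.fst t₀
  have e3 : orbMult (G ≃g G) (fun t : V × V × V => t.2.1) t₀ =
      orbMult (G ≃g G) (fun t : V × V × V => (t.1, t.2.1)) t₀ *
      orbMult (G ≃g G) Prod.snd (x, y) :=
    orbMult_comp (H := G ≃g G) (fun t : V × V × V => (t.1, t.2.1)) (fun _ _ => rfl) Prod.snd t₀
  have e4 : orbMult (G ≃g G) (fun t : V × V × V => t.2.1) t₀ =
      orbMult (G ≃g G) (fun t : V × V × V => t.2) t₀ * orbMult (G ≃g G) Prod.fst (y, z) :=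
    orbMult_comp (H := G ≃g G) (fun t : V × V × V => t.2) (fun _ _ => rfl) Prod.fst t₀
  have e5 : c = orbMult (G ≃g G) (fun t : V × V × V => t.2) t₀ *
      orbMult (G ≃g G) Prod.fst (y, z) := by
    rw [← e4, e3, ← hxy, e2]
  have f1 := orbSum_comp (H := G ≃g G) (fun t : V × V × V => (t.1, t.2.2)) (fun _ _ => rfl) t₀
    (crossing A)
  have f2 := orbSum_comp (H := G ≃g G) (fun t : V × V × V => (t.1, t.2.1)) (fun _ _ => rfl) t₀
    (crossing A)
  have f3 := orbSum_comp (H := G ≃g G) (fun t : V × V × V => t.2) (fun _ _ => rfl) t₀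
    (crossing A)
  have f := orbSum_add_le (H := G ≃g G) t₀ (fun t => crossing A (t.1, t.2.2))
    (fun t => crossing A (t.1, t.2.1)) (fun t => crossing A t.2) (fun t => crossing_le A _ _ _)
  -- All three sums now acquire the common factor `c`, which is finite and nonzero.
  rw [f1, f2, f3] at f
  simp only [t₀] at f
  rw [← orbMult_mul_orbCut hc hf, ← orbMult_mul_orbCut hc hf, ← orbMult_mul_orbCut hc hf,
    ← mul_assoc, ← mul_assoc, ← mul_assoc, ← e1, ← e2, ← e5, ← mul_add] at f
  obtain ⟨n, hn⟩ := orbMult_eq_nat (H := G ≃g G) (fun t : V × V × V => t.1) t₀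
    (finite_orbit_triple hc hf x y z)
  refine (ENNReal.mul_le_mul_iff_right (a := c) (orbMult_ne_zero _ _) ?_).1 f
  rw [hcdef, hn]
  simp

theorem adj_of_mem_orbit {x y : V} (h : G.Adj x y) {p : V × V}
    (hp : p ∈ MulAction.orbit (G ≃g G) (x, y)) : G.Adj p.1 p.2 := by
  obtain ⟨g, rfl⟩ := hp
  exact g.map_adj_iff.2 h

theorem orbSum_crossing_le (A : Set V) {x y : V} (h : G.Adj x y) :
    orbSum (G ≃g G) (x, y) (crossing A) ≤ cutCount G A := by
  unfold orbSum cutCount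
  refine ENNReal.tsum_le_tsum fun p => ?_
  split_ifs with h1 h2 h2
  · exact le_rfl
  · exact absurd (adj_of_mem_orbit h h1) h2
  · simp
  · simp

theorem orbCut_adj_le (hc : G.Connected) (hf : ∀ v : V, (G.neighborSet v).Finite)
    (A : Set V) {x y : V} (h : G.Adj x y) :
    orbCut G A x y ≤ cutCount G A := by
  refine le_trans ?_ (orbSum_crossing_le A h)
  unfold orbCut
  obtain ⟨n, hn⟩ := orbMult_eq_nat (H := G ≃g G) Prod.fst (x, y) (finite_orbit_fst hc hf x y)
  have h0 := orbMult_ne_zero (H := G ≃g G) Prod.fst (x, y)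
  rw [hn] at h0 ⊢
  refine ENNReal.div_le_of_le_mul (le_mul_of_one_le_right (by simp) ?_)
  have : n ≠ 0 := by exact_mod_cast h0
  exact_mod_cast Nat.one_le_iff_ne_zero.2 this

theorem orbCut_self (A : Set V) (x : V) : orbCut G A x x = 0 := by
  have : orbSum (G ≃g G) (x, x) (crossing A) = 0 := by
    classical
    unfold orbSum
    rw [ENNReal.tsum_eq_zero]
    intro p
    rw [ite_eq_right_iff]
    rintro ⟨g, rfl⟩
    simp [crossing]
  simp [orbCut, this]

theorem orbCut_le (hc : G.Connected) (hf : ∀ v : V, (G.neighborSet v).Finite)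
    (hu : ∀ x y, G.Adj x y →
      orbMult (G ≃g G) Prod.fst (x, y) = orbMult (G ≃g G) Prod.snd (x, y))
    (A : Set V) (x y : V) : orbCut G A x y ≤ G.dist x y * cutCount G A := by
  obtain ⟨p, hp⟩ := hc.exists_walk_length_eq_dist x y
  rw [← hp]
  clear hp
  induction p with
  | nil => simp [orbCut_self]
  | @cons u v w h q ih =>
    refine (orbCut_triangle hc hf A w (hu u v h)).trans ?_
    rw [SimpleGraph.Walk.length_cons, Nat.cast_add, Nat.cast_one, add_mul, one_mul, add_comm]
    exact add_le_add ih (orbCut_adj_le hc hf A h)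

theorem orbit_eq_univ' (ht : ∀ u v : V, ∃ φ : G ≃g G, φ u = v) (x v : V) :
    v ∈ MulAction.orbit (G ≃g G) x := by
  obtain ⟨φ, h⟩ := ht x v
  exact ⟨φ, h⟩

open Classical in
theorem orbSum_indicator (ht : ∀ u v : V, ∃ φ : G ≃g G, φ u = v) {A : Set V} (hA : A.Finite)
    (x : V) : orbSum (G ≃g G) x (fun v => if v ∈ A then 1 else 0) = A.ncard := by
  unfold orbSum
  simp only [orbit_eq_univ' ht, if_true]
  have := ENNReal.tsum_set_one A
  rw [tsum_subtype _ (fun _ => (1 : ℝ≥0∞)), ← hA.cast_ncard_eq] at this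
  simpa [Set.indicator_apply] using this

/-- Nonunimodular case: in the directed graph formed by the orbit of the edge `(x, y)` the constant
out-degree `n` and in-degree `m` differ. The arrows starting in `A` number `n |A|`, those ending in
`A` number `m |A|`, and the difference, at least `|A|`, is bounded by the boundary of `A`. -/
theorem ncard_le_of_ne (hc : G.Connected) (hf : ∀ v : V, (G.neighborSet v).Finite)
    (ht : ∀ u v : V, ∃ φ : G ≃g G, φ u = v) {x y : V} (h : G.Adj x y)
    (hne : orbMult (G ≃g G) Prod.fst (x, y) ≠ orbMult (G ≃g G) Prod.snd (x, y))
    {A : Set V} (hA : A.Finite) : (A.ncard : ℝ≥0∞) ≤ cutCount G A := by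
  classical
  obtain ⟨n, hn⟩ := orbMult_eq_nat (H := G ≃g G) Prod.fst (x, y) (finite_orbit_fst hc hf x y)
  obtain ⟨m, hm⟩ := orbMult_eq_nat (H := G ≃g G) Prod.snd (x, y) (finite_orbit_snd hc hf x y)
  have e1 := orbSum_comp (H := G ≃g G) (Prod.fst : V × V → V) (fun _ _ => rfl) (x, y)
    (fun v => if v ∈ A then 1 else 0)
  have e2 := orbSum_comp (H := G ≃g G) (Prod.snd : V × V → V) (fun _ _ => rfl) (x, y)
    (fun v => if v ∈ A then 1 else 0)
  rw [orbSum_indicator ht hA, hn] at e1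
  rw [orbSum_indicator ht hA, hm] at e2
  rw [hn, hm] at hne
  have hswap : orbSum (G ≃g G) (x, y) (fun p => crossing A p.swap) ≤ cutCount G A := by
    unfold orbSum cutCount
    rw [← (Equiv.prodComm V V).tsum_eq (fun p : V × V => if G.Adj p.1 p.2 then crossing A p else 0)]
    refine ENNReal.tsum_le_tsum fun p => ?_
    split_ifs with h1 h2 h2
    · exact le_rfl
    · exact absurd (adj_of_mem_orbit h h1).symm h2
    · simp
    · simp
  have key1 := orbSum_add_le (H := G ≃g G) (x, y) (fun p => if p.1 ∈ A then 1 else 0)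
    (fun p => if p.2 ∈ A then 1 else 0) (crossing A) (by
      intro p
      unfold crossing
      by_cases h1 : p.1 ∈ A <;> by_cases h2 : p.2 ∈ A <;> simp [h1, h2])
  have key2 := orbSum_add_le (H := G ≃g G) (x, y) (fun p => if p.2 ∈ A then 1 else 0)
    (fun p => if p.1 ∈ A then 1 else 0) (fun p => crossing A p.swap) (by
      intro p
      unfold crossing
      by_cases h1 : p.1 ∈ A <;> by_cases h2 : p.2 ∈ A <;> simp [h1, h2])
  rw [e1, e2] at key1 key2
  have fin : ∀ (a b : ℕ) (Q : ℝ≥0∞), a < b → (b : ℝ≥0∞) * A.ncard ≤ a * A.ncard + Q →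
      (A.ncard : ℝ≥0∞) ≤ Q := by
    intro a b Q hab hQ
    have h1 : (a : ℝ≥0∞) * A.ncard + A.ncard ≤ a * A.ncard + Q := by
      refine le_trans ?_ hQ
      have : a * A.ncard + A.ncard ≤ b * A.ncard := by nlinarith
      exact_mod_cast this
    exact (ENNReal.add_le_add_iff_left (by finiteness)).1 h1
  have hne' : n ≠ m := by
    rintro rfl
    exact hne rfl
  rcases lt_or_gt_of_ne hne' with hlt | hlt
  · exact fin n m _ hlt (key2.trans (by gcongr))
  · exact fin m n _ hlt (key1.trans (by gcongr; exact orbSum_crossing_le A h))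

open Classical in
/-- The pairs at distance `< n` leading out of `A` are counted by the values `orbCut G A o y` with `y`
in the ball: by transitivity such a pair is in the orbit of some `(o, y₁)`, and exactly
`orbMult Prod.fst (o, y₁)` vertices `y` give the same orbit, each contributing the inverse of that
number. -/
theorem tsum_ball_crossing_le (hc : G.Connected) (hf : ∀ v : V, (G.neighborSet v).Finite)
    (ht : ∀ u v : V, ∃ φ : G ≃g G, φ u = v) (A : Set V) (o : V) (n : ℕ) :
    (∑' p : V × V, if G.dist p.1 p.2 < n then crossing A p else 0) ≤
      ∑' y, if G.dist o y < n then orbCut G A o y else 0 := by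
  have e : ∀ y, (if G.dist o y < n then orbCut G A o y else 0) =
      ∑' p : V × V, crossing A p * (if G.dist o y < n ∧ p ∈ MulAction.orbit (G ≃g G) (o, y)
        then (orbMult (G ≃g G) Prod.fst (o, y))⁻¹ else 0) := by
    intro y
    split_ifs with h
    · unfold orbCut orbSum
      rw [div_eq_mul_inv, ← ENNReal.tsum_mul_right]
      refine tsum_congr fun p => ?_
      by_cases hp : p ∈ MulAction.orbit (G ≃g G) (o, y) <;> simp [h, hp]
    · simp [h]
  simp_rw [e]
  rw [ENNReal.tsum_comm]
  refine ENNReal.tsum_le_tsum fun p => ?_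
  split_ifs with hp
  swap
  · simp
  rw [ENNReal.tsum_mul_left]
  refine le_mul_of_one_le_right (by simp) ?_
  obtain ⟨φ, hφ⟩ := ht p.1 o
  set y₁ : V := φ p.2 with hy₁
  have hp1 : φ • p = (o, y₁) := Prod.ext hφ rfl
  have horb : MulAction.orbit (G ≃g G) p = MulAction.orbit (G ≃g G) (o, y₁) := by
    rw [← hp1, MulAction.orbit_smul]
  have hd : G.dist o y₁ < n := by
    have := dist_smul_smul φ hc p.1 p.2
    change G.dist (φ p.1) (φ p.2) = _ at this
    rw [hφ] at this
    rw [this]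
    exact hp
  obtain ⟨k, hk⟩ := orbMult_eq_nat (H := G ≃g G) Prod.fst (o, y₁) (finite_orbit_fst hc hf o y₁)
  have hk0 := orbMult_ne_zero (H := G ≃g G) Prod.fst (o, y₁)
  have hone : orbMult (G ≃g G) Prod.fst (o, y₁) * (orbMult (G ≃g G) Prod.fst (o, y₁))⁻¹ = 1 :=
    ENNReal.mul_inv_cancel hk0 (by rw [hk]; simp)
  rw [← hone]
  conv_lhs =>
    enter [1]
    unfold orbMult orbSum
  rw [← ENNReal.tsum_mul_right]
  rw [tsum_pair]
  rw [tsum_eq_single o]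
  · refine ENNReal.tsum_le_tsum fun y => ?_
    by_cases hy : (o, y) ∈ MulAction.orbit (G ≃g G) (o, y₁)
    · have hyo : MulAction.orbit (G ≃g G) (o, y) = MulAction.orbit (G ≃g G) (o, y₁) :=
        MulAction.orbit_eq_iff.2 hy
      have hpy : p ∈ MulAction.orbit (G ≃g G) (o, y) := by
        rw [hyo, ← horb]
        exact MulAction.mem_orbit_self p
      obtain ⟨g, hg⟩ := hy
      have hg1 : g • o = o := congrArg Prod.fst hg
      have hg2 : g • y₁ = y := congrArg Prod.snd hg
      have hdy : G.dist o y < n := by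
        have := dist_smul_smul g hc o y₁
        rw [hg1, hg2] at this
        omega
      have hmul : orbMult (G ≃g G) Prod.fst (o, y) = orbMult (G ≃g G) Prod.fst (o, y₁) := by
        unfold orbMult
        unfold orbSum
        rw [hyo]
      simp [hdy, hpy, hmul]
      split_ifs <;> simp
    · simp [hy]
  · intro x hx
    simp [hx]

/-! ### The isoperimetric inequality -/

/-- Isoperimetric inequality of Coulhon and Saloff-Coste type: a set of at most half the size of
a ball of radius `n` has boundary at least `|A| / (2n)`. Here `P` is any real upper bound for the
number of boundary edges. -/
theorem isoperimetric (hc : G.Connected) (hf : ∀ v : V, (G.neighborSet v).Finite)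
    (ht : ∀ u v : V, ∃ φ : G ≃g G, φ u = v)
    {A : Set V} (hA : A.Finite) (n N : ℕ) (hn : 1 ≤ n)
    (hN : ∀ m, {y | G.dist m y < n}.ncard = N) (hAN : 2 * A.ncard ≤ N) (P : ℝ)
    (hP : cutCount G A ≤ ENNReal.ofReal P) (hP0 : 0 ≤ P) :
    (A.ncard : ℝ) ≤ 2 * n * P := by
  classical
  obtain ⟨o⟩ := hc.nonempty
  by_cases hu : ∀ x y, G.Adj x y →
      orbMult (G ≃g G) Prod.fst (x, y) = orbMult (G ≃g G) Prod.snd (x, y)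
  swap
  · push Not at hu
    obtain ⟨x, y, hxy, hne⟩ := hu
    have h1 := (ncard_le_of_ne hc hf ht hxy hne hA).trans hP
    have h2 : (A.ncard : ℝ) ≤ P := by
      rw [← ENNReal.ofReal_natCast] at h1
      exact (ENNReal.ofReal_le_ofReal_iff hP0).1 h1
    have : (1 : ℝ) ≤ n := by exact_mod_cast hn
    nlinarith
  have hball : ∀ m, (∑' y, if G.dist m y < n then (1 : ℝ≥0∞) else 0) = N := by
    intro m
    have := ENNReal.tsum_set_one {y | G.dist m y < n}
    rw [tsum_subtype _ (fun _ => (1 : ℝ≥0∞)), ← (finite_ball hc hf m n).cast_ncard_eq, hN] at this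
    simpa [Set.indicator_apply] using this
  have hAsum : (∑' y, if y ∈ A then (1 : ℝ≥0∞) else 0) = A.ncard := by
    have := ENNReal.tsum_set_one A
    rw [tsum_subtype _ (fun _ => (1 : ℝ≥0∞)), ← hA.cast_ncard_eq] at this
    simpa [Set.indicator_apply] using this
  have up : (∑' y, if G.dist o y < n then orbCut G A o y else 0) ≤
      N * (n * ENNReal.ofReal P) := by
    rw [← hball o, ← ENNReal.tsum_mul_right]
    refine ENNReal.tsum_le_tsum fun y => ?_
    split_ifs with h
    · rw [one_mul]
      refine (orbCut_le hc hf hu A o y).trans ?_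
      gcongr
    · simp
  have low : (A.ncard : ℝ≥0∞) * N ≤
      (∑' p : V × V, if G.dist p.1 p.2 < n then crossing A p else 0) + A.ncard * A.ncard := by
    rw [tsum_pair]
    conv_lhs => rw [← hAsum]
    conv_rhs => enter [2, 1]; rw [← hAsum]
    rw [← ENNReal.tsum_mul_right, ← ENNReal.tsum_mul_right, ← ENNReal.tsum_add]
    refine ENNReal.tsum_le_tsum fun x => ?_
    by_cases hx : x ∈ A
    · simp only [hx, if_true, one_mul]
      rw [← hball x, ← hAsum, ← ENNReal.tsum_add]
      refine ENNReal.tsum_le_tsum fun y => ?_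
      unfold crossing
      by_cases h1 : G.dist x y < n <;> by_cases h2 : y ∈ A <;> simp [h1, h2, hx]
    · simp [hx]
  have tot : (A.ncard : ℝ≥0∞) * N ≤ N * (n * ENNReal.ofReal P) + A.ncard * A.ncard :=
    low.trans (by gcongr; exact (tsum_ball_crossing_le hc hf ht A o n).trans up)
  have tot' : (A.ncard : ℝ) * N ≤ N * (n * P) + A.ncard * A.ncard := by
    have := ENNReal.toReal_mono (by finiteness) tot
    rw [ENNReal.toReal_add (by finiteness) (by finiteness)] at this
    simpa [ENNReal.toReal_ofReal hP0] using this
  have hAN' : 2 * (A.ncard : ℝ) ≤ N := by exact_mod_cast hAN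
  have hNpos : (0 : ℝ) < N := by
    have : 0 < N := by
      rw [← hN o, Set.ncard_pos (finite_ball hc hf o n)]
      exact ⟨o, by simp; omega⟩
    exact_mod_cast this
  have ha0 : (0 : ℝ) ≤ A.ncard := by positivity
  have : (N : ℝ) * A.ncard ≤ N * (2 * n * P) := by nlinarith
  exact le_of_mul_le_mul_left this hNpos

theorem cutCount_le_edgePerim (hf : ∀ v : V, (G.neighborSet v).Finite) {A : Set V}
    (hA : A.Finite) : cutCount G A ≤ ENNReal.ofReal (edgePerim G A) ∧ 0 ≤ edgePerim G A := by
  classical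
  set f : V → ℝ := A.indicator (fun _ => (1 : ℝ)) with hfdef
  have hgrad : ∀ m, gradAbs G f m = ∑ n ∈ (hf m).toFinset, |f m - f n| := by
    intro m
    exact finsum_mem_eq_finite_toFinset_sum _ (hf m)
  have hnn : ∀ m, 0 ≤ gradAbs G f m := by
    intro m
    rw [hgrad]
    exact Finset.sum_nonneg fun _ _ => abs_nonneg _
  have hsupp : (Function.support (gradAbs G f)).Finite := by
    refine (hA.union (hA.biUnion fun a _ => hf a)).subset ?_
    intro m hm
    by_contra hcon
    simp only [Set.mem_union, Set.mem_iUnion, not_or, not_exists] at hcon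
    apply hm
    rw [hgrad]
    refine Finset.sum_eq_zero fun n hn => ?_
    have hn' : G.Adj m n := by simpa using hn
    have h2 : n ∉ A := fun h => hcon.2 n h hn'.symm
    simp [hfdef, hcon.1, h2]
  have hperim : edgePerim G A = ∑ m ∈ hsupp.toFinset ∪ hA.toFinset, gradAbs G f m :=
    finsum_eq_sum_of_support_subset _ fun m hm => by
      simpa using Or.inl hm
  have hge : ∑ m ∈ hA.toFinset, gradAbs G f m ≤ edgePerim G A := by
    rw [hperim]
    exact Finset.sum_le_sum_of_subset_of_nonneg Finset.subset_union_right fun m _ _ => hnn m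
  refine ⟨?_, (Finset.sum_nonneg fun m _ => hnn m).trans hge⟩
  refine le_trans ?_ (ENNReal.ofReal_le_ofReal hge)
  rw [ENNReal.ofReal_sum_of_nonneg fun m _ => hnn m]
  unfold cutCount
  rw [tsum_pair, tsum_eq_sum (s := hA.toFinset)]
  · refine Finset.sum_le_sum fun m hm => ?_
    have hm' : m ∈ A := by simpa using hm
    rw [hgrad, ENNReal.ofReal_sum_of_nonneg fun _ _ => abs_nonneg _,
      tsum_eq_sum (s := (hf m).toFinset)]
    · refine Finset.sum_le_sum fun n _ => ?_
      unfold crossing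
      by_cases hn : n ∈ A <;> simp [hm', hn, hfdef]
      split_ifs <;> simp
    · intro n hn
      have : ¬ G.Adj m n := by simpa using hn
      simp [this]
  · intro m hm
    have hm' : m ∉ A := by simpa using hm
    simp [crossing, hm']

theorem ncard_ball_eq (hc : G.Connected) (ht : ∀ u v : V, ∃ φ : G ≃g G, φ u = v) (o m : V)
    (n : ℕ) : {y | G.dist m y < n}.ncard = {y | G.dist o y < n}.ncard := by
  obtain ⟨φ, rfl⟩ := ht o m
  rw [← Set.ncard_image_of_injective {y | G.dist o y < n} φ.injective]
  congr 1
  ext y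
  constructor
  · intro hy
    obtain ⟨z, rfl⟩ := φ.surjective y
    refine ⟨z, ?_, rfl⟩
    have := dist_smul_smul φ hc o z
    change G.dist (φ o) (φ z) = _ at this
    simp only [Set.mem_ofPred_eq] at hy ⊢
    omega
  · rintro ⟨z, hz, rfl⟩
    have := dist_smul_smul φ hc o z
    change G.dist (φ o) (φ z) = _ at this
    simp only [Set.mem_ofPred_eq] at hz ⊢
    omega

end Graph

/-- Weak isoperimetric inequality, stronger (decoupled) form, discrete infinite case:
there is a universal constant `C > 0` such that on every connected, locally finite,
countable, vertex-transitive graph with infinite vertex set, if `E ⊆ V` has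
cardinality at most that of a ball of radius `r` (for some real `r ≥ 1`), then
`|A ∩ E| ≤ C r ‖∂A‖` for every finite subset `A ⊆ V`. -/
theorem discrete_weak_isoperimetric_decoupled_infinite :
    ∃ C : ℝ, 0 < C ∧
      ∀ (V : Type) (G : SimpleGraph V), Countable V → G.Connected →
        (∀ v : V, (G.neighborSet v).Finite) →
        (∀ u v : V, ∃ φ : G ≃g G, φ u = v) →
        Infinite V →
        ∀ (E : Set V) (r : ℝ), 1 ≤ r →
        (∀ m₀ : V, E.encard ≤ {n | (G.dist m₀ n : ℝ) < r}.encard) →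
        ∀ A : Set V, A.Finite →
          ((A ∩ E).ncard : ℝ) ≤ C * r * edgePerim G A := by
  refine ⟨24, by norm_num, ?_⟩
  intro V G _ hc hf ht _ E r hr hE A hA
  obtain ⟨o⟩ := hc.nonempty
  obtain ⟨hP, hP0⟩ := cutCount_le_edgePerim hf hA
  set P := edgePerim G A
  set k := ⌈r⌉₊ with hk
  have hk1 : 1 ≤ k := Nat.one_le_ceil_iff.2 (by linarith)
  have hkr : (k : ℝ) ≤ 2 * r := by
    have := Nat.ceil_lt_add_one (a := r) (by linarith)
    linarith
  set N := {y | G.dist o y < k}.ncard with hNdef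
  have hN : ∀ m, {y | G.dist m y < k}.ncard = N := fun m => ncard_ball_eq hc ht o m k
  have hNpos : 0 < N := by
    rw [hNdef, Set.ncard_pos (finite_ball hc hf o k)]
    exact ⟨o, by simp; omega⟩
  have heN : (A ∩ E).ncard ≤ N := by
    have h1 : (A ∩ E).encard ≤ {y | G.dist o y < k}.encard := by
      refine (Set.encard_le_encard Set.inter_subset_right).trans ((hE o).trans ?_)
      refine Set.encard_le_encard fun y hy => ?_
      exact Nat.lt_ceil.2 hy
    exact ENat.toNat_le_toNat h1 (finite_ball hc hf o k).encard_lt_top.ne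
  have hea : (A ∩ E).ncard ≤ A.ncard := Set.ncard_le_ncard Set.inter_subset_left hA
  set e := (A ∩ E).ncard
  set a := A.ncard
  set j := 2 * a / N + 1 with hj
  have hjN : 2 * a ≤ j * N := by
    have := Nat.lt_div_mul_add (a := 2 * a) hNpos
    rw [hj, add_mul, one_mul]
    exact this.le
  -- The two summands of `j` are paired with the two bounds `e ≤ N` and `e ≤ a`.
  have hje : e * j ≤ 3 * a := by
    have h1 := Nat.div_mul_le_self (2 * a) N
    have h2 : e * (2 * a / N) ≤ N * (2 * a / N) := Nat.mul_le_mul_right _ heN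
    rw [hj, mul_add, mul_one]
    nlinarith
  have hiso := isoperimetric hc hf ht hA (2 * k * j) {y | G.dist o y < 2 * k * j}.ncard
    (by have : 1 ≤ j := Nat.le_add_left 1 _
        nlinarith)
    (fun m => ncard_ball_eq hc ht o m _) (hjN.trans (mul_ball_le hc hf k N hN o j)) P hP hP0
  rcases Nat.eq_zero_or_pos a with ha | ha
  · have : e = 0 := by omega
    rw [this]
    simp only [Nat.cast_zero]
    positivity
  have ha' : (0 : ℝ) < a := by exact_mod_cast ha
  have hje' : (e : ℝ) * j ≤ 3 * a := by exact_mod_cast hje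
  push_cast at hiso
  change (a : ℝ) ≤ _ at hiso
  refine le_of_mul_le_mul_left ?_ ha'
  calc (a : ℝ) * e ≤ (2 * (2 * k * j) * P) * e := by gcongr
    _ = 4 * k * P * (e * j) := by ring
    _ ≤ 4 * k * P * (3 * a) := by gcongr
    _ ≤ 4 * (2 * r) * P * (3 * a) := by gcongr
    _ = a * (24 * r * P) := by ring
end

section
/- Suppose V is infinite. Then the volume growth function is super-additive on integer radii: for all integers r, s ≥ 1, Γ(r + s) ≥ Γ(r) + Γ(s). -/
/-!
The idea is to pack disjoint balls of radii `r` and `s` into a ball of radius `r + s`.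
Balls are finite, so an infinite graph contains a vertex at distance at least `r + s` from
`x`, and hence a geodesic segment from `x` to `b` of length exactly `r + s`. Let `v` be its
vertex with `d(x, v) = s` and `d(v, b) = r`. By the triangle inequality the balls `B(x, r)` and
`B(b, s)` lie in `B(v, r + s)`, and they are disjoint because `d(x, b) = r + s`. Transitivity makes
the choice of centers irrelevant (`ncard_ball_le`).
-/

/-- A vertex at prescribed distance from the start of a geodesic from `a` to `b`. -/
lemma exists_dist_split {V : Type*} {G : SimpleGraph V} (hconn : G.Connected) (a b : V) (n : ℕ)
    (hn : n ≤ G.dist a b) : ∃ v, G.dist a v = n ∧ G.dist v b = G.dist a b - n := by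
  obtain ⟨p, hp⟩ := hconn.exists_walk_length_eq_dist a b
  refine ⟨p.getVert n, ?_⟩
  have h1 := SimpleGraph.dist_le (p.take n)
  have h2 := SimpleGraph.dist_le (p.drop n)
  rw [SimpleGraph.Walk.take_length] at h1
  rw [SimpleGraph.Walk.drop_length] at h2
  have h3 := hconn.dist_triangle (u := a) (v := p.getVert n) (w := b)
  omega

lemma finite_ball_s6 {V : Type*} {G : SimpleGraph V} (hconn : G.Connected)
    (hfin : ∀ v : V, (G.neighborSet v).Finite) (x : V) (k : ℕ) :
    {n | G.dist x n < k}.Finite := by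
  induction k with
  | zero => simp
  | succ k ih =>
    refine ((Set.finite_singleton x).union (ih.biUnion fun v _ => hfin v)).subset ?_
    intro n hn
    have hn' : G.dist x n < k + 1 := hn
    by_cases h0 : G.dist x n = 0
    · exact Or.inl (hconn.dist_eq_zero_iff.mp h0).symm
    · obtain ⟨v, h1, h2⟩ := exists_dist_split hconn x n (G.dist x n - 1) (by omega)
      refine Or.inr (Set.mem_biUnion (x := v) (show G.dist x v < k by omega) ?_)
      exact SimpleGraph.dist_eq_one_iff_adj.mp (by omega)

lemma dist_map_le {V : Type*} {G : SimpleGraph V} (hconn : G.Connected) (φ : G ≃g G) (a b : V) :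
    G.dist (φ a) (φ b) ≤ G.dist a b := by
  obtain ⟨p, hp⟩ := hconn.exists_walk_length_eq_dist a b
  have h := SimpleGraph.dist_le (p.map φ.toHom)
  rw [SimpleGraph.Walk.length_map, hp] at h
  exact h

/-- In a transitive graph the cardinality of a ball does not depend on its center; as `u` and `v`
are arbitrary, one inequality suffices. -/
lemma ncard_ball_le {V : Type*} {G : SimpleGraph V} (hconn : G.Connected)
    (hfin : ∀ v : V, (G.neighborSet v).Finite)
    (htrans : ∀ u v : V, ∃ φ : G ≃g G, φ u = v) (u v : V) (k : ℕ) :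
    {n | G.dist u n < k}.ncard ≤ {n | G.dist v n < k}.ncard := by
  obtain ⟨φ, rfl⟩ := htrans u v
  rw [← Set.ncard_image_of_injective {n | G.dist u n < k} φ.injective]
  refine Set.ncard_le_ncard ?_ (finite_ball_s6 hconn hfin _ k)
  rintro _ ⟨n, hn, rfl⟩
  exact (dist_map_le hconn φ u n).trans_lt hn

/-- Super-additivity of the volume growth function of a connected, locally finite,
countable, vertex-transitive infinite graph: for integer radii `r, s ≥ 1`,
`Γ(r + s) ≥ Γ(r) + Γ(s)`. Since by vertex-transitivity the cardinality of a ball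
does not depend on its center, this is stated with arbitrary centers. -/
theorem growth_superadditive_discrete
    (V : Type) (G : SimpleGraph V) (hcount : Countable V) (hconn : G.Connected)
    (hfin : ∀ v : V, (G.neighborSet v).Finite)
    (htrans : ∀ u v : V, ∃ φ : G ≃g G, φ u = v)
    (hinf : Infinite V)
    (r s : ℕ) (hr : 1 ≤ r) (hs : 1 ≤ s) (x y z : V) :
    {n | G.dist y n < r}.ncard + {n | G.dist z n < s}.ncard ≤
      {n | G.dist x n < r + s}.ncard := by
  obtain ⟨w, hw⟩ := (finite_ball_s6 hconn hfin x (r + s)).exists_notMem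
  have hw' : r + s ≤ G.dist x w := not_lt.mp hw
  obtain ⟨b, hb, -⟩ := exists_dist_split hconn x w (r + s) hw'
  obtain ⟨v, hv1, hv2⟩ := exists_dist_split hconn x b s (by omega)
  calc {n | G.dist y n < r}.ncard + {n | G.dist z n < s}.ncard
      ≤ {n | G.dist x n < r}.ncard + {n | G.dist b n < s}.ncard :=
        add_le_add (ncard_ball_le hconn hfin htrans y x r) (ncard_ball_le hconn hfin htrans z b s)
    _ = ({n | G.dist x n < r} ∪ {n | G.dist b n < s}).ncard := by
        refine (Set.ncard_union_eq ?_ (finite_ball_s6 hconn hfin x r)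
          (finite_ball_s6 hconn hfin b s)).symm
        rw [Set.disjoint_left]
        intro n h1 h2
        have h1' : G.dist x n < r := h1
        have h2' : G.dist b n < s := h2
        have h3 := hconn.dist_triangle (u := x) (v := n) (w := b)
        rw [G.dist_comm (u := n)] at h3
        omega
    _ ≤ {n | G.dist v n < r + s}.ncard := by
        refine Set.ncard_le_ncard ?_ (finite_ball_s6 hconn hfin v (r + s))
        rintro n (h | h)
        · have h' : G.dist x n < r := h
          have h3 := hconn.dist_triangle (u := v) (v := x) (w := n)
          rw [G.dist_comm (u := v) (v := x)] at h3
          change G.dist v n < r + s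
          omega
        · have h' : G.dist b n < s := h
          have h3 := hconn.dist_triangle (u := v) (v := b) (w := n)
          change G.dist v n < r + s
          omega
    _ ≤ {n | G.dist x n < r + s}.ncard := ncard_ball_le hconn hfin htrans v x (r + s)
end

section
/- Let (M,d) be a metric space equipped with a Borel measure μ such that all open balls have finite measure and μ(B(x,r)) = μ(B(y,r)) for all x, y ∈ M and all r > 0, so that Γ(r) := μ(B(x,r)) is well defined. Assume that (i) any two points x, y ∈ M are joined by a minimizing geodesic, i.e. there is a map γ : [0, d(x,y)] → M with γ(0) = x, γ(d(x,y)) = y and d(γ(u), γ(v)) = |u − v| for all u, v; and (ii) for every t ≥ 0 there exist points x, y ∈ M with d(x,y) = t. Then Γ is super-additive: Γ(r + s) ≥ Γ(r) + Γ(s) for all r, s ≥ 0. -/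
/-!
Take `p`, `q` at distance `r + s` and let `c` be the point at distance `s` from `p` on a minimizing
geodesic from `p` to `q`, so that `dist c q = r`. The balls `B(p, r)` and `B(q, s)` are disjoint
because `dist p q = r + s`, and both lie in `B(c, r + s)`. Additivity of `μ` and the independence of
the measure of a ball from its center conclude.
-/

open MeasureTheory

/-- Super-additivity of the volume growth function of a metric measure space in which
balls of equal radius have equal (finite) measure, any two points are joined by a
minimizing geodesic, and every nonnegative real number is realized as a distance:
`Γ(r + s) ≥ Γ(r) + Γ(s)` for all `r, s ≥ 0`. Since the measure of a ball does not
depend on its center, this is stated with arbitrary centers. -/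
theorem growth_superadditive_metric
    {M : Type*} [MetricSpace M] [MeasurableSpace M] [BorelSpace M]
    (μ : Measure M)
    (hfin : ∀ (x : M) (r : ℝ), μ (Metric.ball x r) < ⊤)
    (hinv : ∀ (x y : M) (r : ℝ), 0 < r → μ (Metric.ball x r) = μ (Metric.ball y r))
    (hgeo : ∀ x y : M, ∃ γ : ℝ → M, γ 0 = x ∧ γ (dist x y) = y ∧
      ∀ u v : ℝ, u ∈ Set.Icc 0 (dist x y) → v ∈ Set.Icc 0 (dist x y) →
        dist (γ u) (γ v) = |u - v|)
    (hval : ∀ t : ℝ, 0 ≤ t → ∃ x y : M, dist x y = t)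
    (r s : ℝ) (hr : 0 ≤ r) (hs : 0 ≤ s) (x y z : M) :
    μ (Metric.ball y r) + μ (Metric.ball z s) ≤ μ (Metric.ball x (r + s)) := by
  -- At radius `0` all balls are empty, so the center is irrelevant there too.
  have hinv' : ∀ (a b : M) (t : ℝ), 0 ≤ t → μ (Metric.ball a t) = μ (Metric.ball b t) := by
    intro a b t ht
    rcases ht.eq_or_lt with rfl | ht
    · simp
    · exact hinv a b t ht
  obtain ⟨p, q, hpq⟩ := hval (r + s) (add_nonneg hr hs)
  obtain ⟨γ, h0, h1, hγ⟩ := hgeo p q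
  rw [hpq] at h1 hγ
  have hpc : dist p (γ s) = s := by
    have h := hγ 0 s ⟨le_rfl, by linarith⟩ ⟨hs, by linarith⟩
    rwa [h0, zero_sub, abs_neg, abs_of_nonneg hs] at h
  have hqc : dist q (γ s) = r := by
    have h := hγ (r + s) s ⟨by linarith, le_rfl⟩ ⟨hs, by linarith⟩
    rwa [h1, add_sub_cancel_right, abs_of_nonneg hr] at h
  rw [hinv' y p r hr, hinv' z q s hs, hinv' x (γ s) (r + s) (add_nonneg hr hs),
    ← measure_union (Metric.ball_disjoint_ball hpq.ge) measurableSet_ball]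
  refine measure_mono (Set.union_subset ?_ ?_)
  · exact Metric.ball_subset_ball' (by rw [hpc])
  · exact Metric.ball_subset_ball' (by rw [hqc, add_comm])
end

section
/- There exists a universal constant C > 0 (independent of the graph and the group) such that the following holds. Suppose V is finite. If E ⊆ V satisfies min(|E|, |V \ E|) ≤ Γ(r)/2 for some real r ≥ 1, then min(|E|, |V \ E|) ≤ C · r · ‖∂E‖, where ‖∂E‖ is the edge-perimeter of E. -/
/-!
The proof is an averaging argument over the finite automorphism group. Let `A` be the smaller of
`E` and its complement, `f = 1_A`, fix a base point `o`, and let `B` be the `r`-ball around `o`.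
Transitivity says that for fixed `u` the image `φ u` of `u` under a uniformly random
automorphism `φ` is uniformly distributed on `V` (`card_mul_sum_iso`). Telescoping along a geodesic
from `o` to `n ∈ B` therefore bounds the mean of `|f (φ o) - f (φ n)|` by
`d(o, n) ‖∂A‖ / |V|` (`sum_iso_abs_sub_le_walk`). On the other hand, whenever `φ o ∈ A`, at least
`|B| - |A| ≥ |B| / 2` of the points `n ∈ B` have `φ n ∉ A`. Summing over `n ∈ B` and comparing
the two bounds gives `|A| ≤ 2 r ‖∂A‖`.
-/

open scoped BigOperators

lemma edgePerim_compl {V : Type} (G : SimpleGraph V) (A : Set V) : edgePerim G Aᶜ = edgePerim G A := by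
  classical
  have key : ∀ m n : V, |Aᶜ.indicator (fun _ => (1 : ℝ)) m - Aᶜ.indicator (fun _ => (1 : ℝ)) n|
      = |A.indicator (fun _ => (1 : ℝ)) m - A.indicator (fun _ => (1 : ℝ)) n| := by
    intro m n
    by_cases hm : m ∈ A <;> by_cases hn : n ∈ A <;> simp [hm, hn]
  simp only [edgePerim, gradAbs, key]

section Averaging

variable {V : Type} [Fintype V] (G : SimpleGraph V)

lemma abs_sub_le_gradAbs (f : V → ℝ) {u v : V} (h : G.Adj u v) :
    |f u - f v| ≤ gradAbs G f u := by
  classical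
  unfold gradAbs
  rw [finsum_mem_eq_finite_toFinset_sum _ (Set.toFinite _)]
  exact Finset.single_le_sum (f := fun n => |f u - f n|) (fun _ _ => abs_nonneg _)
    (by simpa using h)

lemma edgePerim_eq_sum (A : Set V) :
    edgePerim G A = ∑ m, gradAbs G (A.indicator (fun _ => (1 : ℝ))) m :=
  finsum_eq_sum_of_fintype _

variable [Fintype (G ≃g G)]

/-- On a vertex-transitive graph, the image of any vertex under a uniformly random automorphism is
uniformly distributed. -/
lemma card_mul_sum_iso (ht : ∀ u v : V, ∃ φ : G ≃g G, φ u = v) (h : V → ℝ) (u : V) :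
    (Fintype.card V : ℝ) * ∑ φ : G ≃g G, h (φ u) = Fintype.card (G ≃g G) * ∑ v, h v := by
  -- The sum over automorphisms does not depend on the vertex: reindex by right multiplication.
  have hconst : ∀ v, ∑ φ : G ≃g G, h (φ v) = ∑ φ : G ≃g G, h (φ u) := by
    intro v
    obtain ⟨ψ, rfl⟩ := ht u v
    exact Fintype.sum_equiv (Equiv.mulRight ψ) _ _ (fun φ => rfl)
  have h1 : ∑ v, ∑ φ : G ≃g G, h (φ v) = (Fintype.card V : ℝ) * ∑ φ : G ≃g G, h (φ u) := by
    simp [hconst]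
  rw [← h1, Finset.sum_comm]
  have h2 : ∀ φ : G ≃g G, ∑ v, h (φ v) = ∑ v, h v := fun φ => Equiv.sum_comp φ.toEquiv h
  simp [h2]

/-- Telescoping along a walk: every edge of the walk contributes at most the total gradient. -/
lemma sum_iso_abs_sub_le_walk (ht : ∀ u v : V, ∃ φ : G ≃g G, φ u = v) (f : V → ℝ) {u v : V}
    (p : G.Walk u v) :
    (Fintype.card V : ℝ) * ∑ φ : G ≃g G, |f (φ u) - f (φ v)| ≤
      p.length * (Fintype.card (G ≃g G) * ∑ m, gradAbs G f m) := by
  induction p with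
  | nil => simp
  | @cons u w v h p ih =>
    have h1 : ∑ φ : G ≃g G, |f (φ u) - f (φ v)| ≤
        ∑ φ : G ≃g G, gradAbs G f (φ u) + ∑ φ : G ≃g G, |f (φ w) - f (φ v)| := by
      rw [← Finset.sum_add_distrib]
      refine Finset.sum_le_sum fun φ _ => ?_
      have := abs_sub_le_gradAbs G f ((φ.map_adj_iff).2 h)
      have := abs_sub_le (f (φ u)) (f (φ w)) (f (φ v))
      linarith
    have h2 := card_mul_sum_iso G ht (gradAbs G f) u
    have h3 := mul_le_mul_of_nonneg_left h1 (Nat.cast_nonneg (α := ℝ) (Fintype.card V))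
    rw [mul_add, h2] at h3
    rw [SimpleGraph.Walk.length_cons]
    push_cast
    linarith

/-- The isoperimetric inequality for a set of at most half the size of a ball around `o`. -/
lemma ncard_le_of_two_mul_le (hc : G.Connected) (ht : ∀ u v : V, ∃ φ : G ≃g G, φ u = v)
    (A : Set V) (r : ℝ) (hr : 1 ≤ r) (o : V)
    (hA : 2 * A.ncard ≤ {n | (G.dist o n : ℝ) < r}.ncard) :
    (A.ncard : ℝ) ≤ 2 * r * edgePerim G A := by
  classical
  set f : V → ℝ := A.indicator (fun _ => (1 : ℝ)) with hf
  set B : Finset V := Finset.univ.filter (fun n => (G.dist o n : ℝ) < r) with hB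
  have hf0 : ∀ v, 0 ≤ f v := fun v => Set.indicator_nonneg (fun _ _ => zero_le_one) v
  have hfsum : ∑ v, f v = A.ncard := by
    simp [hf, Set.indicator_apply, Set.ncard_eq_toFinset_card', Set.toFinset_card,
      Fintype.card_subtype]
  have hBcard : {n | (G.dist o n : ℝ) < r}.ncard = B.card := by
    rw [← Set.ncard_coe_finset]; congr 1; ext; simp [hB]
  rw [hBcard] at hA
  have hA' : 2 * (A.ncard : ℝ) ≤ B.card := by exact_mod_cast hA
  have hBpos : (0 : ℝ) < B.card := by
    have : o ∈ B := by simp [hB]; linarith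
    exact_mod_cast Finset.card_pos.2 ⟨o, this⟩
  have hN : (0 : ℝ) < Fintype.card (G ≃g G) := by
    exact_mod_cast Fintype.card_pos_iff.2 ⟨1⟩
  rw [edgePerim_eq_sum, ← hf]
  set P := ∑ m, gradAbs G f m with hP
  have hP0 : 0 ≤ P := Finset.sum_nonneg fun m _ =>
    finsum_nonneg fun n => finsum_nonneg fun _ => abs_nonneg _
  have upper : ∑ n ∈ B, ((Fintype.card V : ℝ) * ∑ φ : G ≃g G, |f (φ o) - f (φ n)|) ≤
      B.card * (r * (Fintype.card (G ≃g G) * P)) := by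
    rw [← nsmul_eq_mul]
    refine Finset.sum_le_card_nsmul _ _ _ fun n hn => ?_
    obtain ⟨p, hp⟩ := hc.exists_walk_length_eq_dist o n
    refine (sum_iso_abs_sub_le_walk G ht f p).trans ?_
    rw [hp]
    have : (G.dist o n : ℝ) < r := by simpa [hB] using hn
    exact mul_le_mul_of_nonneg_right this.le (by positivity)
  have lower : ∀ φ : G ≃g G, f (φ o) * (B.card / 2) ≤ ∑ n ∈ B, |f (φ o) - f (φ n)| := by
    intro φ
    by_cases ho : φ o ∈ A
    · have h1 : f (φ o) = 1 := by simp [hf, ho]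
      rw [h1]
      have h2 : ∑ n ∈ B, (1 - f (φ n)) ≤ ∑ n ∈ B, |1 - f (φ n)| :=
        Finset.sum_le_sum fun n _ => le_abs_self _
      have h3 : ∑ n ∈ B, f (φ n) ≤ ∑ n, f (φ n) :=
        Finset.sum_le_sum_of_subset_of_nonneg (Finset.subset_univ _) fun n _ _ => hf0 _
      have h4 : ∑ n, f (φ n) = ∑ n, f n := Equiv.sum_comp φ.toEquiv f
      rw [Finset.sum_sub_distrib, Finset.sum_const, nsmul_eq_mul, mul_one] at h2
      linarith
    · have h1 : f (φ o) = 0 := by simp [hf, ho]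
      rw [h1, zero_mul]
      exact Finset.sum_nonneg fun n _ => abs_nonneg _
  have lower' := Finset.sum_le_sum fun φ (_ : φ ∈ (Finset.univ : Finset (G ≃g G))) => lower φ
  rw [← Finset.sum_mul, Finset.sum_comm] at lower'
  have lower'' := mul_le_mul_of_nonneg_left lower' (Nat.cast_nonneg (α := ℝ) (Fintype.card V))
  rw [← mul_assoc, card_mul_sum_iso G ht f o, hfsum, Finset.mul_sum] at lower''
  have total := lower''.trans upper
  have hpos : (0 : ℝ) < Fintype.card (G ≃g G) * B.card := mul_pos hN hBpos
  refine le_of_mul_le_mul_left ?_ hpos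
  nlinarith [total]

end Averaging

/-- Weak isoperimetric inequality (discrete, finite/compact case): there is a
universal constant `C > 0` such that on every connected, locally finite,
vertex-transitive graph with finite vertex set, if `E ⊆ V` satisfies
`min(|E|, |V\E|) ≤ Γ(r)/2` for some real `r ≥ 1`, then
`min(|E|, |V\E|) ≤ C r ‖∂E‖`. -/
theorem discrete_weak_isoperimetric_finite :
    ∃ C : ℝ, 0 < C ∧
      ∀ (V : Type) (G : SimpleGraph V), Countable V → G.Connected →
        (∀ v : V, (G.neighborSet v).Finite) →
        (∀ u v : V, ∃ φ : G ≃g G, φ u = v) →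
        Finite V →
        ∀ (E : Set V) (r : ℝ), 1 ≤ r →
        (∀ m₀ : V, 2 * min E.ncard Eᶜ.ncard ≤ {n | (G.dist m₀ n : ℝ) < r}.ncard) →
          ((min E.ncard Eᶜ.ncard : ℕ) : ℝ) ≤ C * r * edgePerim G E := by
  refine ⟨2, two_pos, ?_⟩
  intro V G _ hc _ ht _ E r hr h
  have := Fintype.ofFinite V
  have : Finite (G ≃g G) := DFunLike.finite _
  have := Fintype.ofFinite (G ≃g G)
  obtain ⟨o⟩ := hc.nonempty
  have ho := h o
  rcases le_total E.ncard Eᶜ.ncard with hle | hle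
  · rw [min_eq_left hle] at ho ⊢
    exact ncard_le_of_two_mul_le G hc ht E r hr o ho
  · rw [min_eq_right hle] at ho ⊢
    rw [← edgePerim_compl]
    exact ncard_le_of_two_mul_le G hc ht Eᶜ r hr o ho
end

section
/- There exists a universal constant C > 0 (independent of the dimension N, p, α, w and f) such that the following holds. Let N ≥ 1, let λ denote Lebesgue measure on ℝ^N, and let w : ℝ^N → [0,∞] be a Borel function such that λ({x ∈ ℝ^N : w(x) ≤ r}) ≤ λ(B(0,r)) for every r ≥ 0, where B(0,r) is the open Euclidean ball of radius r centered at the origin. Then for every smooth compactly supported f : ℝ^N → ℝ, every real p with 1 ≤ p < ∞, and every α > 0, one has ‖f‖_{L^p(ℝ^N)} ≤ C · p^{α/(α+1)} · ‖ |∇f| ‖_{L^p(ℝ^N)}^{α/(α+1)} · ‖ w^α f ‖_{L^p(ℝ^N)}^{1/(α+1)}. -/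
/-!
The constant `C = 4` works. The heart of the proof is a dimension-free local inequality: for
measurable `E` in `ℝ^N`,
`∫_E |f|^p ≤ λ(E)^{1/N} ∫ p |f|^{p-1} |∇f|`.
It is the `L^1` Gagliardo-Nirenberg-Sobolev inequality for `|f|^p`, combined with Hölder's inequality
on `E`. The Sobolev inequality is obtained with constant `1`, independent of `N`, by bounding
`|f(x)|^p` by the integral of `p |f|^{p-1} |∇f|` along each line through `x` parallel to a coordinate
axis and applying Mathlib's grid-lines lemma `lintegral_prod_lintegral_pow_le`. Working with the
Euclidean norm of the gradient on each line, rather than with the operator norm for the sup norm on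
`ℝ^N`, is what avoids a loss in the dimension.

If `λ(E) ≤ λ(B(0,r))`, then `λ(E)^{1/N} ≤ 2r`, since the ball lies in a cube of side `2r`. Taking
`E = {w ≤ r}`, using Hölder's inequality on the right-hand side above, and using
`|f| ≤ r^{-α} w^α |f|` off `E`, one gets, for every `r > 0`,
`‖f‖_p^p ≤ 2 r p ‖f‖_p^{p-1} ‖∇f‖_p + (r^{-α} ‖w^α f‖_p)^p`.
The choice `r = ‖f‖_p / (4 p ‖∇f‖_p)` makes the first term half of the left-hand side, and the
theorem follows by solving for `‖f‖_p`.
-/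

open MeasureTheory
open scoped ENNReal

/-- The fundamental theorem of calculus applied to `|h|^p`. The case `p = 1` is separate because `|h|`
need not be differentiable. -/
lemma enorm_rpow_le_lintegral_deriv {h : ℝ → ℝ} (hh : ContDiff ℝ 1 h) (hc : HasCompactSupport h)
    {p : ℝ} (hp : 1 ≤ p) (t : ℝ) :
    ‖h t‖ₑ ^ p ≤ ∫⁻ s, ENNReal.ofReal p * ‖h s‖ₑ ^ (p - 1) * ‖deriv h s‖ₑ := by
  rcases hp.eq_or_lt with rfl | hp1
  · simpa using (hc.enorm_le_lintegral_Ici_deriv hh t).trans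
      (lintegral_mono' Measure.restrict_le_self le_rfl)
  · have h1 : ContDiff ℝ 1 (fun s => ‖h s‖ ^ p) := hh.norm_rpow hp1
    have h2 : HasCompactSupport (fun s => ‖h s‖ ^ p) :=
      hc.comp_left (g := fun y : ℝ => ‖y‖ ^ p) (by simp [(by linarith : p ≠ 0)])
    have h3 := (h2.enorm_le_lintegral_Ici_deriv h1 t).trans
      (lintegral_mono' Measure.restrict_le_self le_rfl)
    have h4 : ‖h t‖ₑ ^ p = ‖(‖h t‖ ^ p)‖ₑ := by
      rw [Real.enorm_rpow_of_nonneg (norm_nonneg _) (by linarith), enorm_norm]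
    rw [h4]
    refine h3.trans (lintegral_mono fun s => ?_)
    have h5 := enorm_fderiv_norm_rpow_le (hh.differentiable one_ne_zero) (x := s)
      (p := p.toNNReal) (by simpa using hp1)
    rw [Real.coe_toNNReal p (by linarith)] at h5
    rw [← enorm_norm (fderiv ℝ _ s), ← enorm_norm (fderiv ℝ h s), ← norm_deriv_eq_norm_fderiv,
      ← norm_deriv_eq_norm_fderiv, enorm_norm, enorm_norm] at h5
    exact h5

/-- If `U x` is at most the integral of `G` along every axis-parallel line through `x`, then
`∫_E U ≤ (∫ G) λ(E)^{1/N}`. For `N ≥ 2` the grid-lines lemma gives `‖U‖_{N/(N-1)} ≤ ‖G‖_1`, and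
Hölder's inequality on `E` finishes; for `N = 1` the hypothesis is already a sup bound. -/
lemma setLIntegral_le_lintegral_mul_measure_rpow {N : ℕ} (hN : 1 ≤ N)
    {U G : (Fin N → ℝ) → ℝ≥0∞} (hU : Measurable U) (hG : Measurable G)
    (h : ∀ x i, U x ≤ ∫⁻ t, G (Function.update x i t)) (E : Set (Fin N → ℝ)) :
    ∫⁻ x in E, U x ≤ (∫⁻ x, G x) * volume E ^ (1 / (N : ℝ)) := by
  rcases hN.eq_or_lt with rfl | hN2
  · have key : ∀ x, U x ≤ ∫⁻ y, G y := fun x => by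
      refine (h x 0).trans_eq ?_
      refine Eq.trans ?_ (((volume_preserving_funUnique (Fin 1) ℝ).symm
        (MeasurableEquiv.funUnique (Fin 1) ℝ)).lintegral_comp hG)
      congr! 3 with t
      ext i
      obtain rfl := Subsingleton.elim i 0
      simp
    calc ∫⁻ x in E, U x ≤ ∫⁻ x in E, ∫⁻ y, G y := lintegral_mono key
      _ = _ := by simp
  · have hN' : (1 : ℝ) < N := by exact_mod_cast hN2
    have hq : Real.HolderConjugate (N : ℝ) (Real.conjExponent N) := .conjExponent hN'
    set q := Real.conjExponent (N : ℝ)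
    have hN0 : (0 : ℝ) < (N : ℝ) - 1 := by linarith
    have hq0 : 0 < q := hq.symm.pos
    have grid : ∫⁻ x, U x ^ q ≤ (∫⁻ x, G x) ^ q := by
      calc ∫⁻ x, U x ^ q = ∫⁻ x, ∏ _i : Fin N, U x ^ (1 / ((N : ℝ) - 1)) := by
            congr! 2 with x
            rw [Finset.prod_const, ← ENNReal.rpow_natCast, ← ENNReal.rpow_mul]
            congr 1
            rw [hq.conjugate_eq]
            simp; field_simp
        _ ≤ ∫⁻ x, ∏ i : Fin N, (∫⁻ t, G (Function.update x i t)) ^ (1 / ((N : ℝ) - 1)) := by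
            gcongr with x i
            exact h x i
        _ ≤ _ := by
            have := lintegral_prod_lintegral_pow_le (ι := Fin N) (A := fun _ => ℝ)
              (fun _ => volume) (p := q) (by simpa using hq) hG
            simpa [volume_pi] using this
    have hol := ENNReal.lintegral_mul_le_Lp_mul_Lq (volume.restrict E) hq.symm
      (f := U) (g := fun _ => 1) hU.aemeasurable aemeasurable_const
    simp only [Pi.mul_apply, mul_one, ENNReal.one_rpow, lintegral_const,
      Measure.restrict_apply_univ, one_mul] at hol
    refine hol.trans ?_
    gcongr
    calc (∫⁻ x in E, U x ^ q) ^ (1 / q) ≤ ((∫⁻ x, G x) ^ q) ^ (1 / q) := by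
          gcongr
          exact (lintegral_mono' Measure.restrict_le_self le_rfl).trans grid
      _ = _ := by rw [← ENNReal.rpow_mul, mul_one_div_cancel hq0.ne', ENNReal.rpow_one]

/-- The dimension-free local Sobolev inequality for `|f|^p`. -/
lemma setLIntegral_enorm_rpow_le {N : ℕ} (hN : 1 ≤ N)
    {f : EuclideanSpace ℝ (Fin N) → ℝ} (hf : ContDiff ℝ 1 f) (hc : HasCompactSupport f)
    {p : ℝ} (hp : 1 ≤ p) {E : Set (EuclideanSpace ℝ (Fin N))} (hE : MeasurableSet E) :
    ∫⁻ x in E, ‖f x‖ₑ ^ p ≤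
      (∫⁻ x, ENNReal.ofReal p * ‖f x‖ₑ ^ (p - 1) * ‖fderiv ℝ f x‖ₑ) *
        volume E ^ (1 / (N : ℝ)) := by
  set G : EuclideanSpace ℝ (Fin N) → ℝ≥0∞ := fun x =>
    ENNReal.ofReal p * ‖f x‖ₑ ^ (p - 1) * ‖fderiv ℝ f x‖ₑ with hGdef
  have hfm : Measurable f := hf.continuous.measurable
  have hfd : Measurable (fderiv ℝ f) := (hf.continuous_fderiv one_ne_zero).measurable
  have hG : Measurable G := by fun_prop
  have hU : Measurable fun x => ‖f x‖ₑ ^ p := by fun_prop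
  have mp := PiLp.volume_preserving_toLp (Fin N)
  have hT : Measurable (WithLp.toLp 2 : (Fin N → ℝ) → EuclideanSpace ℝ (Fin N)) := mp.measurable
  have line : ∀ (x : Fin N → ℝ) i, ‖f (WithLp.toLp 2 x)‖ₑ ^ p ≤
      ∫⁻ t, G (WithLp.toLp 2 (Function.update x i t)) := by
    intro x i
    set γ : ℝ → EuclideanSpace ℝ (Fin N) := fun t => WithLp.toLp 2 (Function.update x i t) with hγ
    have hγd : ∀ t, HasDerivAt γ (EuclideanSpace.single i (1 : ℝ)) t := by
      intro t
      have := ((PiLp.continuousLinearEquiv 2 ℝ (fun _ : Fin N => ℝ)).symm.hasFDerivAt).comp_hasDerivAt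
        t (hasDerivAt_update x i t)
      exact this
    have hγc : ContDiff ℝ 1 γ :=
      (PiLp.continuousLinearEquiv 2 ℝ (fun _ : Fin N => ℝ)).symm.contDiff.comp
        (contDiff_update 1 x i)
    have hγe : Topology.IsClosedEmbedding γ :=
      (PiLp.continuousLinearEquiv 2 ℝ (fun _ : Fin N => ℝ)).symm.toHomeomorph.isClosedEmbedding.comp
        (isClosedEmbedding_update x i)
    have h1 := enorm_rpow_le_lintegral_deriv (hf.comp hγc) (hc.comp_isClosedEmbedding hγe) hp (x i)
    simp only [Function.comp_apply, hγ, Function.update_eq_self] at h1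
    refine h1.trans (lintegral_mono fun t => ?_)
    simp only [hGdef]
    gcongr
    have h2 : deriv (f ∘ γ) t = fderiv ℝ f (γ t) (EuclideanSpace.single i (1 : ℝ)) :=
      (((hf.differentiable one_ne_zero) (γ t)).hasFDerivAt.comp_hasDerivAt t (hγd t)).deriv
    change ‖deriv (f ∘ γ) t‖ₑ ≤ ‖fderiv ℝ f (γ t)‖ₑ
    rw [h2]
    refine (ContinuousLinearMap.le_opENorm _ _).trans_eq ?_
    simp [enorm_eq_nnnorm]
  have main := setLIntegral_le_lintegral_mul_measure_rpow hN (hU.comp hT) (hG.comp hT) line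
    (WithLp.toLp 2 ⁻¹' E)
  simp only [Function.comp_def] at main
  rw [mp.lintegral_comp hG, mp.measure_preimage hE.nullMeasurableSet,
    mp.setLIntegral_comp_preimage hE hU] at main
  exact main

/-- A Euclidean ball of radius `r` is contained in a cube of side `2r`. -/
lemma volume_ball_zero_le {N : ℕ} {r : ℝ} (hr : 0 < r) :
    volume (Metric.ball (0 : EuclideanSpace ℝ (Fin N)) r) ≤ ENNReal.ofReal ((2 * r) ^ N) := by
  have mp := PiLp.volume_preserving_toLp (Fin N)
  rw [← mp.measure_preimage measurableSet_ball.nullMeasurableSet]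
  have h := Real.volume_pi_ball (0 : Fin N → ℝ) hr
  rw [Fintype.card_fin] at h
  rw [← h]
  refine measure_mono fun x hx => ?_
  simp only [Set.mem_preimage, Metric.mem_ball, dist_zero_right] at hx ⊢
  rw [pi_norm_lt_iff hr]
  intro i
  exact (PiLp.norm_apply_le (WithLp.toLp 2 x : EuclideanSpace ℝ (Fin N)) i).trans_lt hx

/-- Hölder's inequality for `u^{p-1} v`, in a form that includes `p = 1`. -/
lemma lintegral_rpow_mul_le_lintegral_rpow {X : Type*} [MeasurableSpace X] {μ : Measure X}
    {u v : X → ℝ≥0∞} (hu : Measurable u) (hv : Measurable v) {p : ℝ} (hp : 1 ≤ p) :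
    ∫⁻ x, u x ^ (p - 1) * v x ∂μ ≤
      (∫⁻ x, u x ^ p ∂μ) ^ (1 - 1 / p) * (∫⁻ x, v x ^ p ∂μ) ^ (1 / p) := by
  have hp0 : 0 < p := by linarith
  have h1 : 1 / p ≤ 1 := by rw [div_le_one hp0]; exact hp
  have := ENNReal.lintegral_mul_norm_pow_le (μ := μ) (hu.pow_const p).aemeasurable
    (hv.pow_const p).aemeasurable (p := 1 - 1 / p) (q := 1 / p) (by linarith) (by positivity)
    (by ring)
  refine le_trans (le_of_eq ?_) this
  congr! 3 with x
  · rw [← ENNReal.rpow_mul]; congr 1; field_simp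
  · rw [← ENNReal.rpow_mul, mul_one_div_cancel hp0.ne', ENNReal.rpow_one]

/-- The choice of `r`: here `a`, `D`, `b` stand for the norms of `f`, `∇f` and `w^α f`. -/
lemma optimize_radius {a D b p α : ℝ} (ha : 0 < a) (hD : 0 < D) (hb : 0 ≤ b) (hp : 1 ≤ p)
    (hα : 0 < α)
    (h : ∀ r : ℝ, 0 < r → a ^ p ≤ 2 * r * p * a ^ (p - 1) * D + (r ^ (-α) * b) ^ p) :
    a ≤ 4 * p ^ (α / (α + 1)) * D ^ (α / (α + 1)) * b ^ (1 / (α + 1)) := by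
  have hp0 : 0 < p := by linarith
  -- With this radius the gradient term is exactly `a ^ p / 2`.
  set r := a / (4 * p * D) with hr
  have hr0 : 0 < r := by positivity
  have h1 := h r hr0
  have h2 : 2 * r * p * a ^ (p - 1) * D = a ^ p / 2 := by
    rw [Real.rpow_sub_one ha.ne', hr]; field_simp; norm_num
  rw [h2] at h1
  have h3 : a ^ p ≤ (2 * (r ^ (-α) * b)) ^ p := by
    rw [Real.mul_rpow (by norm_num) (by positivity)]
    have : (2 : ℝ) ≤ 2 ^ p := by
      simpa using Real.rpow_le_rpow_of_exponent_le (by norm_num : (1 : ℝ) ≤ 2) hp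
    have h0 : 0 ≤ (r ^ (-α) * b) ^ p := by positivity
    nlinarith
  have h4 : a ≤ 2 * (r ^ (-α) * b) := (Real.rpow_le_rpow_iff ha.le (by positivity) hp0).1 h3
  have h5 : a ^ (α + 1) ≤ 2 * (4 * p * D) ^ α * b := by
    have : r ^ (-α) = (4 * p * D) ^ α / a ^ α := by
      rw [Real.rpow_neg hr0.le, hr, Real.div_rpow ha.le (by positivity), inv_div]
    rw [this] at h4
    have := mul_le_mul_of_nonneg_left h4 (by positivity : 0 ≤ a ^ α)
    rw [Real.rpow_add_one ha.ne']
    refine this.trans_eq ?_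
    have := (Real.rpow_pos_of_pos ha α).ne'
    field_simp
  have h6 : a ^ (α + 1) ≤
      (4 * p ^ (α / (α + 1)) * D ^ (α / (α + 1)) * b ^ (1 / (α + 1))) ^ (α + 1) := by
    rw [Real.mul_rpow (by positivity) (by positivity), Real.mul_rpow (by positivity) (by positivity),
      Real.mul_rpow (by positivity) (by positivity), ← Real.rpow_mul hp0.le, ← Real.rpow_mul hD.le,
      ← Real.rpow_mul hb, div_mul_cancel₀ _ (by positivity), div_mul_cancel₀ _ (by positivity),
      Real.rpow_one, Real.rpow_add_one (by norm_num : (4 : ℝ) ≠ 0)]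
    refine h5.trans ?_
    rw [Real.mul_rpow (by positivity) hD.le, Real.mul_rpow (by positivity) hp0.le]
    have : 0 ≤ (4 : ℝ) ^ α * p ^ α * D ^ α * b := by positivity
    nlinarith
  exact (Real.rpow_le_rpow_iff ha.le (by positivity) (by positivity)).1 h6

/-- Splitting `∫ |f|^p` at the level `r` of the weight: the local inequality `hS` controls
`{w ≤ r}`, and `1 ≤ r^{-α} w^α` controls the complement. -/
lemma lintegral_le_add_of_sublevel {N : ℕ} (hN : 1 ≤ N)
    {w : EuclideanSpace ℝ (Fin N) → ℝ≥0∞} (hw : Measurable w)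
    (hwv : ∀ r : ℝ, 0 ≤ r → volume {x | w x ≤ ENNReal.ofReal r} ≤
      volume (Metric.ball (0 : EuclideanSpace ℝ (Fin N)) r))
    {f : EuclideanSpace ℝ (Fin N) → ℝ} (hf : Measurable f) {p α : ℝ} (hp : 1 ≤ p) (hα : 0 < α)
    {M : ℝ≥0∞}
    (hS : ∀ E : Set (EuclideanSpace ℝ (Fin N)), MeasurableSet E →
      ∫⁻ x in E, ‖f x‖ₑ ^ p ≤ M * volume E ^ (1 / (N : ℝ)))
    {r : ℝ} (hr : 0 < r) :
    ∫⁻ x, ‖f x‖ₑ ^ p ≤ M * ENNReal.ofReal (2 * r) +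
      ENNReal.ofReal (r ^ (-α)) ^ p * ∫⁻ x, (w x ^ α * ‖f x‖ₑ) ^ p := by
  have hp0 : 0 < p := by linarith
  have hE : MeasurableSet {x | w x ≤ ENNReal.ofReal r} := measurableSet_le hw measurable_const
  rw [← lintegral_add_compl _ hE]
  gcongr ?_ + ?_
  · refine (hS _ hE).trans ?_
    gcongr
    have hN0 : (N : ℝ) ≠ 0 := by positivity
    calc _ ≤ (ENNReal.ofReal ((2 * r) ^ N)) ^ (1 / (N : ℝ)) := by
          gcongr
          exact (hwv r hr.le).trans (volume_ball_zero_le hr)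
      _ = _ := by
          rw [← Real.rpow_natCast, ← ENNReal.ofReal_rpow_of_pos (by positivity),
            ← ENNReal.rpow_mul, mul_one_div_cancel hN0, ENNReal.rpow_one]
  · rw [← lintegral_const_mul _ (by fun_prop)]
    refine (setLIntegral_mono (by fun_prop) fun x hx => ?_).trans
      (lintegral_mono' Measure.restrict_le_self le_rfl)
    rw [← ENNReal.mul_rpow_of_nonneg _ _ hp0.le, ← mul_assoc]
    gcongr
    refine le_mul_of_one_le_left zero_le ?_
    have hx' : ENNReal.ofReal r ≤ w x := (lt_of_not_ge fun hle => hx hle).le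
    calc (1 : ℝ≥0∞) = ENNReal.ofReal (r ^ (-α)) * ENNReal.ofReal r ^ α := by
          rw [ENNReal.ofReal_rpow_of_pos hr, ← ENNReal.ofReal_mul (by positivity),
            ← Real.rpow_add hr]
          simp
      _ ≤ _ := by gcongr

lemma lintegral_enorm_rpow_lt_top {N : ℕ} {F : Type*} [NormedAddCommGroup F]
    {g : EuclideanSpace ℝ (Fin N) → F} (hg : Continuous g) (hc : HasCompactSupport g)
    {p : ℝ} (hp : 0 < p) : ∫⁻ x, ‖g x‖ₑ ^ p < ∞ := by
  have h := (hg.memLp_of_hasCompactSupport (μ := volume) (p := ENNReal.ofReal p) hc)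
  have := lintegral_rpow_enorm_lt_top_of_eLpNorm_lt_top (by simpa using hp) ENNReal.ofReal_ne_top h.2
  rwa [ENNReal.toReal_ofReal hp.le] at this

/-- Euclidean `L^p` uncertainty inequality with a general weight: there is a universal
constant `C > 0` (independent of the dimension `N`, `p`, `α`, `w` and `f`) such that
if `w : ℝ^N → [0,∞]` is a Borel function whose sublevel sets satisfy
`λ({w ≤ r}) ≤ λ(B(0,r))` for all `r ≥ 0`, then for every smooth compactly supported
`f`, every `1 ≤ p < ∞` and every `α > 0`:
`‖f‖_{L^p} ≤ C p^{α/(α+1)} ‖|∇f|‖_{L^p}^{α/(α+1)} ‖w^α f‖_{L^p}^{1/(α+1)}`. -/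
theorem euclidean_uncertainty :
    ∃ C : ℝ, 0 < C ∧
      ∀ (N : ℕ), 1 ≤ N →
      ∀ w : EuclideanSpace ℝ (Fin N) → ℝ≥0∞, Measurable w →
      (∀ r : ℝ, 0 ≤ r →
        volume {x | w x ≤ ENNReal.ofReal r} ≤
          volume (Metric.ball (0 : EuclideanSpace ℝ (Fin N)) r)) →
      ∀ f : EuclideanSpace ℝ (Fin N) → ℝ, ContDiff ℝ (⊤ : ℕ∞) f → HasCompactSupport f →
      ∀ p : ℝ, 1 ≤ p → ∀ α : ℝ, 0 < α →
        (∫⁻ x, ENNReal.ofReal (|f x| ^ p)) ^ (1 / p) ≤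
          ENNReal.ofReal (C * p ^ (α / (α + 1))) *
            ((∫⁻ x, ENNReal.ofReal (‖fderiv ℝ f x‖ ^ p)) ^ (1 / p)) ^ (α / (α + 1)) *
            ((∫⁻ x, (w x ^ α * ENNReal.ofReal |f x|) ^ p) ^ (1 / p)) ^ (1 / (α + 1)) := by
  refine ⟨4, by norm_num, ?_⟩
  intro N hN w hw hwv f hf hc p hp α hα
  have hp0 : 0 < p := by linarith
  have hf1 : ContDiff ℝ 1 f := hf.of_le (by exact_mod_cast le_top)
  have e1 : ∀ x, ENNReal.ofReal (|f x| ^ p) = ‖f x‖ₑ ^ p := fun x => by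
    rw [← ENNReal.ofReal_rpow_of_nonneg (abs_nonneg _) hp0.le, Real.enorm_eq_ofReal_abs]
  have e2 : ∀ x, ENNReal.ofReal (‖fderiv ℝ f x‖ ^ p) = ‖fderiv ℝ f x‖ₑ ^ p := fun x => by
    rw [← ENNReal.ofReal_rpow_of_nonneg (norm_nonneg _) hp0.le, ofReal_norm]
  simp only [e1, e2, ← Real.enorm_eq_ofReal_abs]
  have hfm : Measurable f := hf1.continuous.measurable
  have hfd : Measurable (fderiv ℝ f) := (hf1.continuous_fderiv one_ne_zero).measurable
  have hAtop := lintegral_enorm_rpow_lt_top hf1.continuous hc hp0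
  have hDtop := lintegral_enorm_rpow_lt_top (hf1.continuous_fderiv one_ne_zero) (hc.fderiv ℝ) hp0
  set A := ∫⁻ x, ‖f x‖ₑ ^ p with hA
  set D := ∫⁻ x, ‖fderiv ℝ f x‖ₑ ^ p with hD
  set W := ∫⁻ x, (w x ^ α * ‖f x‖ₑ) ^ p with hW
  have hS : ∀ E : Set (EuclideanSpace ℝ (Fin N)), MeasurableSet E →
      ∫⁻ x in E, ‖f x‖ₑ ^ p ≤
        ENNReal.ofReal p * (A ^ (1 - 1 / p) * D ^ (1 / p)) * volume E ^ (1 / (N : ℝ)) := by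
    intro E hE
    refine (setLIntegral_enorm_rpow_le hN hf1 hc hp hE).trans ?_
    gcongr
    simp only [mul_assoc]
    rw [lintegral_const_mul _ (by fun_prop)]
    gcongr
    exact lintegral_rpow_mul_le_lintegral_rpow (by fun_prop) (by fun_prop) hp
  rcases eq_or_ne A 0 with hA0 | hA0
  · rw [hA0, ENNReal.zero_rpow_of_pos (by positivity)]
    exact zero_le
  have hD0 : D ≠ 0 := by
    intro h0
    -- With `E = univ` the measure factor is `∞`, but it is multiplied by `0`.
    have := hS Set.univ MeasurableSet.univ
    rw [h0, ENNReal.zero_rpow_of_pos (by positivity), Measure.restrict_univ] at this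
    simp only [mul_zero, zero_mul] at this
    exact hA0 (le_antisymm this zero_le)
  have hα1 : 0 < α + 1 := by linarith
  rcases eq_or_ne W ∞ with hWt | hWt
  · rw [hWt, ENNReal.top_rpow_of_pos (by positivity), ENNReal.top_rpow_of_pos (by positivity),
      ENNReal.mul_top]
    · exact le_top
    · refine mul_ne_zero ?_ ?_
      · simp only [ne_eq, ENNReal.ofReal_eq_zero, not_le]
        positivity
      · simp [ENNReal.rpow_eq_zero_iff, hD0, hDtop.ne]
  -- All three integrals are now finite, so their `1/p`-th powers are real numbers `a`, `d`, `b`.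
  have key : ∀ X : ℝ≥0∞, X ≠ ∞ → ∃ y : ℝ, 0 ≤ y ∧ X ^ (1 / p) = ENNReal.ofReal y ∧
      X = ENNReal.ofReal y ^ p := by
    intro X hX
    have h1 : X ^ (1 / p) = ENNReal.ofReal (X ^ (1 / p)).toReal :=
      (ENNReal.ofReal_toReal (ENNReal.rpow_ne_top_of_nonneg (by positivity) hX)).symm
    refine ⟨(X ^ (1 / p)).toReal, ENNReal.toReal_nonneg, h1, ?_⟩
    rw [← h1, ← ENNReal.rpow_mul, one_div_mul_cancel hp0.ne', ENNReal.rpow_one]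
  obtain ⟨a, ha, haA, hAa⟩ := key A hAtop.ne
  obtain ⟨d, hd, hdD, hDd⟩ := key D hDtop.ne
  obtain ⟨b, hb, hbW, hWb⟩ := key W hWt
  have ha0 : 0 < a := by
    refine ha.lt_of_ne fun h => hA0 ?_
    rw [hAa, ← h]; simp [hp0]
  have hd0 : 0 < d := by
    refine hd.lt_of_ne fun h => hD0 ?_
    rw [hDd, ← h]; simp [hp0]
  have hAa' : A ^ (1 - 1 / p) = ENNReal.ofReal (a ^ (p - 1)) := by
    rw [hAa, ← ENNReal.rpow_mul, ENNReal.ofReal_rpow_of_pos ha0]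
    congr 2; field_simp
  have real : a ≤ 4 * p ^ (α / (α + 1)) * d ^ (α / (α + 1)) * b ^ (1 / (α + 1)) := by
    refine optimize_radius ha0 hd0 hb hp hα fun r hr => ?_
    have h := lintegral_le_add_of_sublevel hN hw hwv hfm hp hα hS hr
    rw [← hA, ← hW, hAa', hdD, hWb, hAa, ← ENNReal.mul_rpow_of_nonneg _ _ hp0.le,
      ← ENNReal.ofReal_mul (by positivity), ← ENNReal.ofReal_mul (by positivity),
      ← ENNReal.ofReal_mul (by positivity), ← ENNReal.ofReal_mul (by positivity),
      ENNReal.ofReal_rpow_of_nonneg (by positivity) hp0.le,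
      ENNReal.ofReal_rpow_of_nonneg (by positivity) hp0.le,
      ← ENNReal.ofReal_add (by positivity) (by positivity),
      ENNReal.ofReal_le_ofReal_iff (by positivity)] at h
    refine h.trans_eq ?_
    ring
  rw [haA, hdD, hbW, ENNReal.ofReal_rpow_of_nonneg hd (by positivity),
    ENNReal.ofReal_rpow_of_nonneg hb (by positivity), ← ENNReal.ofReal_mul (by positivity),
    ← ENNReal.ofReal_mul (by positivity)]
  exact ENNReal.ofReal_le_ofReal real
end

section
/- There exists a universal constant C > 0 (independent of the dimension N, r, E and f) such that the following holds. Let N ≥ 1 and let λ denote Lebesgue measure on ℝ^N. If E ⊆ ℝ^N is a Borel set with λ(E) ≤ λ(B(0,r)) for some r > 0, where B(0,r) is the open Euclidean ball of radius r centered at the origin, then for every smooth compactly supported f : ℝ^N → ℝ one has ∫_E |f| dλ ≤ C · r · ∫_{ℝ^N} |∇f| dλ. -/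
/-!
The constant `C = 1` works, via the Riesz potential estimate. Let `σ` be the surface measure
of the unit sphere. Integrating `f` along rays issuing from `x` and averaging over all directions
gives, in polar coordinates, `σ(S) |f x| ≤ ∫ |∇f|(y) |x - y|^(1-N) dy` (`enorm_le_rieszPotential`).
Integrating over `x ∈ E` and exchanging the integrals, it remains to bound
`∫_E |x - y|^(1-N) dx` uniformly in `y`. As the kernel is radially decreasing, among the sets of
measure at most `λ(B(0,r))` this is largest for the ball `B(y,r)` (`setLIntegral_rieszKernel_le`),
where polar coordinates give exactly `σ(S) r`. The factor `σ(S)`, the only quantity that depends on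
the dimension, cancels.
-/

open MeasureTheory Set Metric ENNReal

section Riesz

variable {V : Type*} [NormedAddCommGroup V] [NormedSpace ℝ V]

/-- The fundamental theorem of calculus along the ray from `x` in the direction `-θ`. -/
lemma enorm_le_lintegral_ray {f : V → ℝ} (hf : ContDiff ℝ 1 f) (hc : HasCompactSupport f)
    (x θ : V) (hθ : ‖θ‖ = 1) :
    ‖f x‖ₑ ≤ ∫⁻ t in Ioi (0 : ℝ), ‖fderiv ℝ f (x - t • θ)‖ₑ := by
  have hu : ContDiff ℝ 1 fun t : ℝ => f (x - t • θ) := by fun_prop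
  have hiso : Isometry fun t : ℝ => x - t • θ := Isometry.of_dist_eq fun s t => by
    rw [dist_sub_left, dist_eq_norm, ← sub_smul, norm_smul, hθ, mul_one, ← dist_eq_norm]
  have hcu : HasCompactSupport fun t : ℝ => f (x - t • θ) :=
    hc.comp_isClosedEmbedding hiso.isClosedEmbedding
  have h := hcu.integral_Ioi_deriv_eq hu 0
  simp only [zero_smul, sub_zero] at h
  rw [← enorm_neg, ← h]
  refine (enorm_integral_le_lintegral_enorm _).trans (lintegral_mono fun t => ?_)
  have hd : HasDerivAt (fun t : ℝ => f (x - t • θ)) (fderiv ℝ f (x - t • θ) (-θ)) t := by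
    have h1 : HasDerivAt (fun t : ℝ => x - t • θ) (-θ) t := by
      simpa using ((hasDerivAt_id t).smul_const θ).const_sub x
    exact (hf.differentiable one_ne_zero _).hasFDerivAt.comp_hasDerivAt t h1
  rw [hd.deriv, enorm_le_iff_norm_le]
  simpa [hθ] using (fderiv ℝ f (x - t • θ)).le_opNorm (-θ)

/-- The kernel `‖z‖^(1 - d)` on a `d`-dimensional space, with values in `[0, ∞]`. For `d ≥ 2` its
value at the origin is `∞`, so that it is radially decreasing on the whole space. -/
noncomputable def rieszKernel (z : V) : ℝ≥0∞ :=
  (ENNReal.ofReal (‖z‖ ^ (Module.finrank ℝ V - 1)))⁻¹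

variable [MeasurableSpace V] [BorelSpace V]

lemma measurable_rieszKernel : Measurable (rieszKernel : V → ℝ≥0∞) := by
  unfold rieszKernel
  fun_prop

variable [FiniteDimensional ℝ V] [Nontrivial V]

/-- Integration in polar coordinates. -/
lemma lintegral_eq_polar (μ : Measure V) [μ.IsAddHaarMeasure] {F : V → ℝ≥0∞} (hF : Measurable F) :
    ∫⁻ x, F x ∂μ = ∫⁻ θ, (∫⁻ t in Ioi (0 : ℝ),
      ENNReal.ofReal (t ^ (Module.finrank ℝ V - 1)) * F (t • (θ : V))) ∂μ.toSphere := by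
  have h1 : ∫⁻ x, F x ∂μ = ∫⁻ x : ({(0)}ᶜ : Set V), F x ∂(μ.comap (↑)) := by
    rw [lintegral_subtype_comap (measurableSet_singleton _).compl F, restrict_compl_singleton]
  have h2 := μ.measurePreserving_homeomorphUnitSphereProd.lintegral_comp_emb
    (Homeomorph.measurableEmbedding _)
    (fun p : sphere (0 : V) 1 × Ioi (0 : ℝ) => F ((p.2 : ℝ) • (p.1 : V)))
  have h3 : ∀ x : ({(0)}ᶜ : Set V),
      F (((homeomorphUnitSphereProd V x).2 : ℝ) • ((homeomorphUnitSphereProd V x).1 : V)) = F x := by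
    intro x
    congr 1
    have : ‖(x : V)‖ ≠ 0 := norm_ne_zero_iff.2 x.2
    simp [smul_smul, this]
  simp only [h3] at h2
  have hm : Measurable
      (fun p : sphere (0 : V) 1 × Ioi (0 : ℝ) => F ((p.2 : ℝ) • (p.1 : V))) := by fun_prop
  rw [h1, h2, lintegral_prod _ hm.aemeasurable]
  refine lintegral_congr fun θ => ?_
  rw [Measure.volumeIoiPow, lintegral_withDensity_eq_lintegral_mul _ (by fun_prop) (by fun_prop)]
  exact lintegral_subtype_comap measurableSet_Ioi
    (fun t : ℝ => ENNReal.ofReal (t ^ (Module.finrank ℝ V - 1)) * F (t • (θ : V)))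

/-- The kernel cancels the Jacobian of polar coordinates. -/
lemma lintegral_rieszKernel_mul (μ : Measure V) [μ.IsAddHaarMeasure] {G : V → ℝ≥0∞}
    (hG : Measurable G) :
    ∫⁻ z, rieszKernel z * G z ∂μ
      = ∫⁻ θ, (∫⁻ t in Ioi (0 : ℝ), G (t • (θ : V))) ∂μ.toSphere := by
  rw [lintegral_eq_polar μ (F := fun z => rieszKernel z * G z) (measurable_rieszKernel.mul hG)]
  refine lintegral_congr fun θ => setLIntegral_congr_fun measurableSet_Ioi fun t (ht : 0 < t) => ?_
  have hn : ‖t • (θ : V)‖ = t := by simp [norm_smul, abs_of_pos ht]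
  have h0 : ENNReal.ofReal (t ^ (Module.finrank ℝ V - 1)) ≠ 0 := by
    simpa using pow_pos ht _
  simp only [rieszKernel, hn]
  rw [← mul_assoc, ENNReal.mul_inv_cancel h0 ofReal_ne_top, one_mul]

lemma setLIntegral_ball_rieszKernel (μ : Measure V) [μ.IsAddHaarMeasure] (r : ℝ) :
    ∫⁻ z in ball (0 : V) r, rieszKernel z ∂μ = μ.toSphere univ * ENNReal.ofReal r := by
  have h := lintegral_rieszKernel_mul μ
    (measurable_const.indicator measurableSet_ball : Measurable
      ((ball (0 : V) r).indicator fun _ => (1 : ℝ≥0∞)))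
  rw [← lintegral_indicator measurableSet_ball]
  calc _ = ∫⁻ z, rieszKernel z * (ball (0 : V) r).indicator (fun _ => (1 : ℝ≥0∞)) z ∂μ := by
        refine lintegral_congr fun z => ?_
        by_cases hz : z ∈ ball (0 : V) r <;> simp only [hz, indicator_of_mem, indicator_of_notMem,
          not_false_eq_true, mul_one, mul_zero]
    _ = ∫⁻ _, ENNReal.ofReal r ∂μ.toSphere := by
        rw [h]
        refine lintegral_congr fun θ => ?_
        rw [setLIntegral_congr_fun (g := (Iio r).indicator fun _ => (1 : ℝ≥0∞)) measurableSet_Ioi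
          fun t (ht : 0 < t) => ?_]
        · rw [lintegral_indicator measurableSet_Iio, Measure.restrict_restrict measurableSet_Iio,
            inter_comm, Ioi_inter_Iio]
          simp
        · simp [indicator, norm_smul, abs_of_pos ht]
    _ = _ := by rw [lintegral_const, mul_comm]

/-- Bathtub principle for the radially decreasing kernel: a set of measure at most that of the
ball of radius `r` does not carry more of the kernel than this ball centred at the pole. -/
lemma setLIntegral_rieszKernel_le (μ : Measure V) [μ.IsAddHaarMeasure] {A : Set V}
    (hA : MeasurableSet A) {r : ℝ} (hr : 0 < r) (hAr : μ A ≤ μ (ball 0 r)) :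
    ∫⁻ z in A, rieszKernel z ∂μ ≤ μ.toSphere univ * ENNReal.ofReal r := by
  set B := ball (0 : V) r
  have hB : MeasurableSet B := measurableSet_ball
  set c : ℝ≥0∞ := (ENNReal.ofReal (r ^ (Module.finrank ℝ V - 1)))⁻¹
  have hdiff : μ (A \ B) ≤ μ (B \ A) := by
    have hfin : μ (A ∩ B) ≠ ∞ := measure_ne_top_of_subset inter_subset_right measure_ball_lt_top.ne
    rw [← measure_inter_add_sdiff A hB, ← measure_inter_add_sdiff B hA, inter_comm B A] at hAr
    exact (ENNReal.add_le_add_iff_left hfin).1 hAr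
  rw [← setLIntegral_ball_rieszKernel μ r, ← lintegral_inter_add_sdiff _ A hB,
    ← lintegral_inter_add_sdiff _ B hA, inter_comm B A]
  gcongr 1
  calc ∫⁻ z in A \ B, rieszKernel z ∂μ ≤ ∫⁻ _ in A \ B, c ∂μ := by
        refine setLIntegral_mono measurable_const fun z hz => ?_
        have : r ≤ ‖z‖ := by simpa [B] using hz.2
        simp only [rieszKernel, c]
        gcongr
    _ = c * μ (A \ B) := setLIntegral_const _ _
    _ ≤ c * μ (B \ A) := by gcongr
    _ = ∫⁻ _ in B \ A, c ∂μ := (setLIntegral_const _ _).symm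
    _ ≤ ∫⁻ z in B \ A, rieszKernel z ∂μ := by
        refine setLIntegral_mono measurable_rieszKernel fun z hz => ?_
        have : ‖z‖ ≤ r := by simpa [B] using (mem_ball_zero_iff.1 hz.1).le
        simp only [rieszKernel, c]
        gcongr

lemma setLIntegral_rieszKernel_sub_le (μ : Measure V) [μ.IsAddHaarMeasure] {A : Set V}
    (hA : MeasurableSet A) {r : ℝ} (hr : 0 < r) (hAr : μ A ≤ μ (ball 0 r)) (y : V) :
    ∫⁻ x in A, rieszKernel (x - y) ∂μ ≤ μ.toSphere univ * ENNReal.ofReal r := by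
  have hm : MeasurableSet ((fun z => z + y) ⁻¹' A) := measurable_add_const y hA
  have h := setLIntegral_rieszKernel_le μ hm hr (by rwa [measure_preimage_add_right])
  have e := lintegral_add_right_eq_self (μ := μ) (A.indicator fun x => rieszKernel (x - y)) y
  rw [lintegral_indicator hA] at e
  rw [← e]
  refine le_trans (le_of_eq ?_) h
  rw [← lintegral_indicator hm]
  refine lintegral_congr fun z => ?_
  simp only [indicator, add_sub_cancel_right]
  rfl

/-- Pointwise bound of a function by the Riesz potential of its gradient. -/
lemma enorm_le_rieszPotential (μ : Measure V) [μ.IsAddHaarMeasure] {f : V → ℝ}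
    (hf : ContDiff ℝ 1 f) (hc : HasCompactSupport f) (x : V) :
    μ.toSphere univ * ‖f x‖ₑ ≤ ∫⁻ y, rieszKernel (x - y) * ‖fderiv ℝ f y‖ₑ ∂μ := by
  have hcont : Continuous (fderiv ℝ f) := hf.continuous_fderiv one_ne_zero
  have hG : Measurable fun z => ‖fderiv ℝ f (x - z)‖ₑ :=
    (hcont.comp (continuous_const.sub continuous_id)).enorm.measurable
  calc μ.toSphere univ * ‖f x‖ₑ = ∫⁻ _, ‖f x‖ₑ ∂μ.toSphere := by rw [lintegral_const, mul_comm]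
    _ ≤ ∫⁻ θ, (∫⁻ t in Ioi (0 : ℝ), ‖fderiv ℝ f (x - t • (θ : V))‖ₑ) ∂μ.toSphere :=
        lintegral_mono fun θ => enorm_le_lintegral_ray hf hc x θ (by simp)
    _ = ∫⁻ z, rieszKernel z * ‖fderiv ℝ f (x - z)‖ₑ ∂μ := (lintegral_rieszKernel_mul μ hG).symm
    _ = _ := by
        rw [← lintegral_sub_left_eq_self _ x]
        simp

lemma setLIntegral_enorm_le (μ : Measure V) [μ.IsAddHaarMeasure] {f : V → ℝ}
    (hf : ContDiff ℝ 1 f) (hc : HasCompactSupport f) {A : Set V}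
    (hA : MeasurableSet A) {r : ℝ} (hr : 0 < r) (hAr : μ A ≤ μ (ball 0 r)) :
    ∫⁻ x in A, ‖f x‖ₑ ∂μ ≤ ENNReal.ofReal r * ∫⁻ y, ‖fderiv ℝ f y‖ₑ ∂μ := by
  have hg : Measurable fun y => ‖fderiv ℝ f y‖ₑ :=
    (hf.continuous_fderiv one_ne_zero).enorm.measurable
  have hfm : Measurable fun y => ‖f y‖ₑ := hf.continuous.enorm.measurable
  have hσ : μ.toSphere univ ≠ 0 := Measure.measure_univ_ne_zero.2 μ.toSphere_ne_zero
  rw [← ENNReal.mul_le_mul_iff_right hσ (measure_ne_top _ _)]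
  calc μ.toSphere univ * ∫⁻ x in A, ‖f x‖ₑ ∂μ = ∫⁻ x in A, μ.toSphere univ * ‖f x‖ₑ ∂μ :=
        (lintegral_const_mul _ hfm).symm
    _ ≤ ∫⁻ x in A, ∫⁻ y, rieszKernel (x - y) * ‖fderiv ℝ f y‖ₑ ∂μ ∂μ :=
        lintegral_mono fun x => enorm_le_rieszPotential μ hf hc x
    _ = ∫⁻ y, ∫⁻ x in A, rieszKernel (x - y) * ‖fderiv ℝ f y‖ₑ ∂μ ∂μ := by
        refine lintegral_lintegral_swap (Measurable.aemeasurable ?_)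
        exact (measurable_rieszKernel.comp (measurable_fst.sub measurable_snd)).mul
          (hg.comp measurable_snd)
    _ = ∫⁻ y, (∫⁻ x in A, rieszKernel (x - y) ∂μ) * ‖fderiv ℝ f y‖ₑ ∂μ :=
        lintegral_congr fun y => lintegral_mul_const _
          (measurable_rieszKernel.comp (measurable_id.sub_const y))
    _ ≤ ∫⁻ y, μ.toSphere univ * ENNReal.ofReal r * ‖fderiv ℝ f y‖ₑ ∂μ := by
        gcongr with y
        exact setLIntegral_rieszKernel_sub_le μ hA hr hAr y
    _ = _ := by rw [lintegral_const_mul _ hg, mul_assoc]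

end Riesz

/-- Euclidean gradient estimate (Lemma "Faris" in `ℝ^N`): there is a universal
constant `C > 0` (independent of the dimension `N`, `r`, `E` and `f`) such that if
`E ⊆ ℝ^N` is a Borel set with `λ(E) ≤ λ(B(0,r))` for some `r > 0`, then for every
smooth compactly supported `f : ℝ^N → ℝ`,
`∫_E |f| dλ ≤ C r ∫_{ℝ^N} |∇f| dλ`. -/
theorem euclidean_gradient_estimate :
    ∃ C : ℝ, 0 < C ∧
      ∀ (N : ℕ), 1 ≤ N →
      ∀ E : Set (EuclideanSpace ℝ (Fin N)), MeasurableSet E →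
      ∀ r : ℝ, 0 < r →
        volume E ≤ volume (Metric.ball (0 : EuclideanSpace ℝ (Fin N)) r) →
      ∀ f : EuclideanSpace ℝ (Fin N) → ℝ, ContDiff ℝ (⊤ : ℕ∞) f → HasCompactSupport f →
        (∫ x in E, |f x|) ≤ C * r * ∫ x, ‖fderiv ℝ f x‖ := by
  refine ⟨1, one_pos, fun N hN E hE r hr hEr f hf hc => ?_⟩
  have : NeZero N := ⟨by lia⟩
  have hf1 : ContDiff ℝ 1 f := hf.of_le (by exact_mod_cast le_top)
  have hcont : Continuous (fderiv ℝ f) := hf1.continuous_fderiv one_ne_zero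
  have hint : Integrable (fderiv ℝ f) :=
    hcont.integrable_of_hasCompactSupport (hc.fderiv ℝ)
  have h := setLIntegral_enorm_le volume hf1 hc hE hr hEr
  have hI : (∫ x in E, |f x|) = (∫⁻ x in E, ‖f x‖ₑ).toReal :=
    integral_norm_eq_lintegral_enorm hf1.continuous.aestronglyMeasurable
  rw [one_mul, hI, integral_norm_eq_lintegral_enorm hint.1,
    show r = (ENNReal.ofReal r).toReal from (ENNReal.toReal_ofReal hr.le).symm,
    ← ENNReal.toReal_mul]
  exact ENNReal.toReal_mono (ENNReal.mul_ne_top ofReal_ne_top hint.2.ne) h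
end
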